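/- arXiv:1801.02162 — 2 statements merged into one kernel-verified Lean document; each statement's English description precedes it below -/
import Mathlib

section
/- Let P be a convex polygon with no vertex of interior angle less than ω, for ω ∈ (0, π). Then the sum of the angular measures of all circular arcs constituting the ω-cloud of P equals 4π. -/
open EuclideanGeometry Real Set
open scoped Classical

noncomputable section

abbrev Plane := EuclideanSpace ℝ (Fin 2)

/-- The unit vector in direction `θ`. -/
def unitVec (θ : ℝ) : Plane := (WithLp.equiv 2 (Fin 2 → ℝ)).symm ![Real.cos θ, Real.sin θ]

/-- The closed ray from `x` in direction `d`. -/
def ray (x d : Plane) : Set Plane := {y | ∃ t : ℝ, 0 ≤ t ∧ y = x + t • d}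

/-- The closed wedge with apex `x` bounded by the rays in directions `d₁` and `d₂`. -/
def wedgeSet (x d₁ d₂ : Plane) : Set Plane :=
  {y | ∃ s t : ℝ, 0 ≤ s ∧ 0 ≤ t ∧ y = x + s • d₁ + t • d₂}

/-- The wedge with apex `x`, arm directions `d₁`, `d₂` (unit vectors at angle `ω`),
is a minimal `ω`-wedge for `P`: it contains `P` and both arms touch `P`. -/
def IsMinWedge (P : Set Plane) (ω : ℝ) (x d₁ d₂ : Plane) : Prop :=
  ‖d₁‖ = 1 ∧ ‖d₂‖ = 1 ∧ InnerProductGeometry.angle d₁ d₂ = ω ∧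
  P ⊆ wedgeSet x d₁ d₂ ∧ (P ∩ ray x d₁).Nonempty ∧ (P ∩ ray x d₂).Nonempty

/-- The `ω`-cloud of `P`: the locus of apices of all minimal `ω`-wedges. -/
def omegaCloud (P : Set Plane) (ω : ℝ) : Set Plane := {x | ∃ d₁ d₂, IsMinWedge P ω x d₁ d₂}

/-- `V` is the vertex set of a convex polygon: at least 3 points, in strictly convex position. -/
def IsConvexPolygon (V : Finset Plane) : Prop :=
  3 ≤ V.card ∧ ∀ v ∈ V, v ∉ convexHull ℝ ((V.erase v : Finset Plane) : Set Plane)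

/-- The interior angle of a convex body `P` at a boundary point `v`, defined as the
supremum of angles `∠ a v b` over `a, b ∈ P \ {v}`. -/
def interiorAngle (P : Set Plane) (v : Plane) : ℝ :=
  sSup {θ : ℝ | ∃ a ∈ P, ∃ b ∈ P, a ≠ v ∧ b ≠ v ∧ θ = EuclideanGeometry.angle a v b}

/-- A circular arc, given by center, radius, starting angle and angular extent. -/
structure CircArc where
  center : Plane
  radius : ℝ
  start : ℝ
  delta : ℝ

/-- The (closed) point set of a circular arc. -/
def CircArc.points (A : CircArc) : Set Plane :=
  {p | ∃ θ ∈ Set.Icc A.start (A.start + A.delta), p = A.center + A.radius • unitVec θ}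

/-- The relative interior of a circular arc. -/
def CircArc.intPoints (A : CircArc) : Set Plane :=
  {p | ∃ θ ∈ Set.Ioo A.start (A.start + A.delta), p = A.center + A.radius • unitVec θ}

/-- The start point of an arc when it is traversed clockwise. -/
def CircArc.cwStart (A : CircArc) : Plane := A.center + A.radius • unitVec (A.start + A.delta)

/-- The end point of an arc when it is traversed clockwise. -/
def CircArc.cwEnd (A : CircArc) : Plane := A.center + A.radius • unitVec A.start

/-- The set of (bisector) directions of minimal `ω`-wedges of `P` with apex `x`. -/
def wedgeDirs (P : Set Plane) (ω : ℝ) (x : Plane) : Set Plane :=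
  {d | ∃ d₁ d₂, IsMinWedge P ω x d₁ d₂ ∧ d = (‖d₁ + d₂‖)⁻¹ • (d₁ + d₂)}

/-- On every interior point of the arc `A`, the minimal `ω`-wedge of `P` touches `P`
at `p` (with one arm) and `q` (with the other arm). -/
def ContactPair (P : Set Plane) (ω : ℝ) (A : CircArc) (p q : Plane) : Prop :=
  ∀ x ∈ A.intPoints, ∃ d₁ d₂, IsMinWedge P ω x d₁ d₂ ∧ p ∈ ray x d₁ ∧ q ∈ ray x d₂

@[simp] lemma unitVec_zero (θ : ℝ) : unitVec θ 0 = Real.cos θ := by simp [unitVec]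
@[simp] lemma unitVec_one (θ : ℝ) : unitVec θ 1 = Real.sin θ := by simp [unitVec]

lemma plane_ext {x y : Plane} (h0 : x 0 = y 0) (h1 : x 1 = y 1) : x = y := by
  ext i; fin_cases i <;> simpa

lemma unitVec_cont : Continuous unitVec := by
  unfold unitVec
  refine (PiLp.continuous_toLp 2 _).comp ?_
  refine continuous_pi fun i => ?_
  fin_cases i
  · simpa using Real.continuous_cos
  · simpa using Real.continuous_sin

lemma exists_polar (v : Plane) : ∃ r α : ℝ, 0 ≤ r ∧ -π < α ∧ α ≤ π ∧ v = r • unitVec α ∧ ‖v‖ = r := by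
  refine ⟨‖(⟨v 0, v 1⟩ : ℂ)‖, Complex.arg ⟨v 0, v 1⟩, norm_nonneg _, Complex.neg_pi_lt_arg _,
    Complex.arg_le_pi _, ?_, ?_⟩
  · apply plane_ext
    · simp [Complex.norm_mul_cos_arg]
    · simp [Complex.norm_mul_sin_arg]
  · rw [EuclideanSpace.norm_eq, Complex.norm_def, Complex.normSq_mk]
    simp [Fin.sum_univ_two, sq]

/-- signed distance type functional -/
def nf (θ : ℝ) : Plane →ₗ[ℝ] ℝ where
  toFun v := -Real.sin θ * v 0 + Real.cos θ * v 1
  map_add' x y := by simp; ring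
  map_smul' c x := by simp; ring

lemma nf_apply (θ : ℝ) (v : Plane) : nf θ v = -Real.sin θ * v 0 + Real.cos θ * v 1 := rfl

lemma nf_unitVec (θ α : ℝ) : nf θ (unitVec α) = Real.sin (α - θ) := by
  rw [nf_apply, Real.sin_sub]; simp; ring

lemma nf_inj {ω θ : ℝ} (hs : Real.sin ω ≠ 0) {x y : Plane} (h0 : nf θ x = nf θ y)
    (h1 : nf (θ + ω) x = nf (θ + ω) y) : x = y := by
  simp only [nf_apply, Real.sin_add, Real.cos_add] at h0 h1
  have e := Real.sin_sq_add_cos_sq θ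
  have k0 : Real.sin ω * ((Real.cos θ * x 0 + Real.sin θ * x 1) - (Real.cos θ * y 0 + Real.sin θ * y 1)) = 0 := by
    linear_combination (-1) * h1 + Real.cos ω * h0
  have k := (mul_eq_zero.mp k0).resolve_left hs
  apply plane_ext
  · linear_combination Real.cos θ * k - Real.sin θ * h0 - (x 0 - y 0) * e
  · linear_combination Real.sin θ * k + Real.cos θ * h0 - (x 1 - y 1) * e

/-- decomposition in the wedge basis -/
lemma nf_decomp {ω θ : ℝ} (hs : Real.sin ω ≠ 0) (y : Plane) :
    y = (-(nf (θ + ω) y) / Real.sin ω) • unitVec θ + (nf θ y / Real.sin ω) • unitVec (θ + ω) := by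
  apply nf_inj (θ := θ) hs
  · simp only [map_add, map_smul, nf_unitVec, smul_eq_mul]
    simp; field_simp
  · simp only [map_add, map_smul, nf_unitVec, smul_eq_mul]
    simp; field_simp

/-- support values -/
def sup1 (V : Finset Plane) (hne : V.Nonempty) (θ : ℝ) : ℝ := V.inf' hne (fun v => nf θ v)
def sup2 (V : Finset Plane) (hne : V.Nonempty) (θ : ℝ) : ℝ := V.inf' hne (fun v => -nf θ v)

def apex (V : Finset Plane) (hne : V.Nonempty) (ω θ : ℝ) : Plane :=
  (sup2 V hne (θ + ω) / Real.sin ω) • unitVec θ + (sup1 V hne θ / Real.sin ω) • unitVec (θ + ω)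

lemma nf_cont (v : Plane) : Continuous (fun θ => nf θ v) := by
  simp only [nf_apply]; fun_prop

lemma sup1_cont (V : Finset Plane) (hne : V.Nonempty) : Continuous (sup1 V hne) := by
  unfold sup1
  exact Continuous.finset_inf'_apply hne (fun v _ => nf_cont v)

lemma sup2_cont (V : Finset Plane) (hne : V.Nonempty) : Continuous (sup2 V hne) := by
  unfold sup2
  exact Continuous.finset_inf'_apply hne (fun v _ => (nf_cont v).neg)

lemma apex_cont (V : Finset Plane) (hne : V.Nonempty) (ω : ℝ) : Continuous (apex V hne ω) := by
  have h1 := sup1_cont V hne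
  have h2 := sup2_cont V hne
  have h3 := unitVec_cont
  unfold apex
  fun_prop

lemma apex_periodic (V : Finset Plane) (hne : V.Nonempty) (ω : ℝ) :
    Function.Periodic (apex V hne ω) (2 * π) := by
  intro θ
  have hn : ∀ α, nf (α + 2 * π) = nf α := by
    intro α; ext v; simp [nf_apply]
  have hu : ∀ α, unitVec (α + 2 * π) = unitVec α := by
    intro α; apply plane_ext <;> simp
  have e : θ + 2 * π + ω = θ + ω + 2 * π := by ring
  simp only [apex, sup1, sup2, e, hn, hu]

lemma nf_apex {V : Finset Plane} {hne : V.Nonempty} {ω θ : ℝ} (hs : Real.sin ω ≠ 0) :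
    nf θ (apex V hne ω θ) = sup1 V hne θ ∧ nf (θ + ω) (apex V hne ω θ) = - sup2 V hne (θ + ω) := by
  constructor
  · simp only [apex, map_add, map_smul, nf_unitVec, smul_eq_mul]
    simp; field_simp
  · simp only [apex, map_add, map_smul, nf_unitVec, smul_eq_mul]
    simp; field_simp

lemma sup1_le {V : Finset Plane} {hne : V.Nonempty} {θ : ℝ} {y : Plane}
    (hy : y ∈ convexHull ℝ (V : Set Plane)) : sup1 V hne θ ≤ nf θ y := by
  have : convexHull ℝ (V : Set Plane) ⊆ {y | sup1 V hne θ ≤ nf θ y} := by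
    apply convexHull_min
    · intro v hv; exact Finset.inf'_le (f := fun v => nf θ v) hv
    · exact convex_halfSpace_ge (nf θ).isLinear _
  exact this hy

lemma sup2_le {V : Finset Plane} {hne : V.Nonempty} {θ : ℝ} {y : Plane}
    (hy : y ∈ convexHull ℝ (V : Set Plane)) : nf θ y ≤ -sup2 V hne θ := by
  have : convexHull ℝ (V : Set Plane) ⊆ {y | nf θ y ≤ -sup2 V hne θ} := by
    apply convexHull_min
    · intro v hv
      have := Finset.inf'_le (f := fun v => -nf θ v) hv
      simp only [Set.mem_ofPred_eq, sup2]; linarith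
    · exact convex_halfSpace_le (nf θ).isLinear _
  exact this hy

lemma sup1_mem (V : Finset Plane) (hne : V.Nonempty) (θ : ℝ) : ∃ v ∈ V, sup1 V hne θ = nf θ v :=
  Finset.exists_mem_eq_inf' hne _
lemma sup2_mem (V : Finset Plane) (hne : V.Nonempty) (θ : ℝ) : ∃ v ∈ V, sup2 V hne θ = -nf θ v :=
  Finset.exists_mem_eq_inf' hne _

lemma norm_unitVec (θ : ℝ) : ‖unitVec θ‖ = 1 := by
  rw [EuclideanSpace.norm_eq]
  simp [Fin.sum_univ_two]

lemma inner_unitVec (α β : ℝ) : inner ℝ (unitVec α) (unitVec β) = Real.cos (α - β) := by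
  rw [PiLp.inner_apply, Real.cos_sub]; simp [Fin.sum_univ_two]; ring

lemma angle_unitVec (α β : ℝ) : InnerProductGeometry.angle (unitVec α) (unitVec β) = Real.arccos (Real.cos (α - β)) := by
  rw [InnerProductGeometry.angle, inner_unitVec, norm_unitVec, norm_unitVec]; simp

lemma apex_minWedge {V : Finset Plane} {hne : V.Nonempty} {ω : ℝ} (hω : ω ∈ Set.Ioo 0 π) (θ : ℝ) :
    apex V hne ω θ ∈ omegaCloud (convexHull ℝ (V : Set Plane)) ω := by
  have hs : 0 < Real.sin ω := Real.sin_pos_of_pos_of_lt_pi hω.1 hω.2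
  obtain ⟨h1, h2⟩ := nf_apex (V := V) (hne := hne) (θ := θ) hs.ne'
  refine ⟨unitVec θ, unitVec (θ + ω), norm_unitVec _, norm_unitVec _, ?_, ?_, ?_, ?_⟩
  · rw [angle_unitVec]
    simp [Real.arccos_cos hω.1.le hω.2.le]
  · intro y hy
    have a1 := sup1_le (hne := hne) (θ := θ) hy
    have a2 := sup2_le (hne := hne) (θ := θ + ω) hy
    have := nf_decomp (θ := θ) hs.ne' (y - apex V hne ω θ)
    refine ⟨_, _, ?_, ?_, by rw [add_assoc, ← this]; abel⟩
    · apply div_nonneg _ hs.le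
      rw [map_sub]; linarith
    · apply div_nonneg _ hs.le
      rw [map_sub]; linarith
  · obtain ⟨v, hv, e⟩ := sup1_mem V hne θ
    have hv' : v ∈ convexHull ℝ (V : Set Plane) := subset_convexHull ℝ _ hv
    refine ⟨v, hv', ?_⟩
    have a2 := sup2_le (hne := hne) (θ := θ + ω) hv'
    have := nf_decomp (θ := θ) hs.ne' (v - apex V hne ω θ)
    have z : nf θ (v - apex V hne ω θ) = 0 := by rw [map_sub]; linarith
    rw [z] at this
    simp only [zero_div, zero_smul, add_zero] at this
    refine ⟨_, ?_, by rw [← this]; abel⟩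
    apply div_nonneg _ hs.le
    rw [map_sub]; linarith
  · obtain ⟨v, hv, e⟩ := sup2_mem V hne (θ + ω)
    have hv' : v ∈ convexHull ℝ (V : Set Plane) := subset_convexHull ℝ _ hv
    refine ⟨v, hv', ?_⟩
    have a2 := sup1_le (hne := hne) (θ := θ) hv'
    have := nf_decomp (θ := θ) hs.ne' (v - apex V hne ω θ)
    have z : nf (θ + ω) (v - apex V hne ω θ) = 0 := by rw [map_sub]; linarith
    rw [z] at this
    simp only [neg_zero, zero_div, zero_smul, zero_add] at this
    refine ⟨_, ?_, by rw [← this]; abel⟩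
    apply div_nonneg _ hs.le
    rw [map_sub]; linarith

lemma minWedge_oriented {V : Finset Plane} {hne : V.Nonempty} {ω : ℝ} (hω : ω ∈ Set.Ioo 0 π) {θ : ℝ}
    {x : Plane} (h : IsMinWedge (convexHull ℝ (V : Set Plane)) ω x (unitVec θ) (unitVec (θ + ω))) :
    x = apex V hne ω θ := by
  have hs : 0 < Real.sin ω := Real.sin_pos_of_pos_of_lt_pi hω.1 hω.2
  obtain ⟨h1, h2⟩ := nf_apex (V := V) (hne := hne) (θ := θ) hs.ne'
  obtain ⟨-, -, -, hsub, ⟨p, hp, s, hs0, rfl⟩, ⟨q, hq, t, ht0, rfl⟩⟩ := h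
  apply nf_inj (θ := θ) hs.ne'
  · rw [h1]
    have a := sup1_le (hne := hne) (θ := θ) hp
    simp only [map_add, map_smul, nf_unitVec] at a
    simp only [sub_self, Real.sin_zero, smul_zero, add_zero] at a
    obtain ⟨v, hv, e⟩ := sup1_mem V hne θ
    obtain ⟨s', t', hs', ht', e'⟩ := hsub (subset_convexHull ℝ _ hv)
    rw [e'] at e
    simp only [map_add, map_smul, nf_unitVec, smul_eq_mul] at e
    simp at e
    have := mul_nonneg ht' hs.le
    linarith
  · rw [h2]
    have a := sup2_le (hne := hne) (θ := θ + ω) hq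
    simp only [map_add, map_smul, nf_unitVec] at a
    simp only [sub_self, Real.sin_zero, smul_zero, add_zero] at a
    obtain ⟨v, hv, e⟩ := sup2_mem V hne (θ + ω)
    obtain ⟨s', t', hs', ht', e'⟩ := hsub (subset_convexHull ℝ _ hv)
    rw [e'] at e
    simp only [map_add, map_smul, nf_unitVec, smul_eq_mul] at e
    simp at e
    have := mul_nonneg hs' hs.le
    linarith

lemma IsMinWedge.symm {P : Set Plane} {ω : ℝ} {x d₁ d₂ : Plane} (h : IsMinWedge P ω x d₁ d₂) :
    IsMinWedge P ω x d₂ d₁ := by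
  obtain ⟨h1, h2, h3, h4, h5, h6⟩ := h
  refine ⟨h2, h1, by rwa [InnerProductGeometry.angle_comm], ?_, h6, h5⟩
  intro y hy
  obtain ⟨s, t, hs, ht, e⟩ := h4 hy
  exact ⟨t, s, ht, hs, by rw [e]; abel⟩

lemma unitVec_int (α : ℝ) (k : ℤ) : unitVec (α + k * (2 * π)) = unitVec α := by
  apply plane_ext <;> simp

lemma cloud_sub {V : Finset Plane} {hne : V.Nonempty} {ω : ℝ} (hω : ω ∈ Set.Ioo 0 π) {x : Plane}
    (h : x ∈ omegaCloud (convexHull ℝ (V : Set Plane)) ω) : ∃ θ, apex V hne ω θ = x := by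
  obtain ⟨d₁, d₂, h⟩ := h
  obtain ⟨r, α, -, -, -, e1, n1⟩ := exists_polar d₁
  obtain ⟨r', β, -, -, -, e2, n2⟩ := exists_polar d₂
  rw [h.1] at n1
  rw [h.2.1] at n2
  subst n1 n2
  rw [one_smul] at e1 e2
  subst e1 e2
  have ha := h.2.2.1
  rw [angle_unitVec] at ha
  have hc : Real.cos (α - β) = Real.cos ω := by
    rw [← ha, Real.cos_arccos (Real.neg_one_le_cos _) (Real.cos_le_one _)]
  obtain ⟨k, hk | hk⟩ := Real.cos_eq_cos_iff.mp hc
  · have : unitVec α = unitVec (β + ω) := by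
      rw [← unitVec_int (β + ω) (-k)]; congr 1; push_cast; linarith
    rw [this] at h
    exact ⟨β, (minWedge_oriented hω h.symm).symm⟩
  · have : unitVec β = unitVec (α + ω) := by
      rw [← unitVec_int (α + ω) (-k)]; congr 1; push_cast; linarith
    rw [this] at h
    exact ⟨α, (minWedge_oriented hω h).symm⟩

/-- points of the polygon seen from a doubly realised apex -/
lemma polar_mem {V : Finset Plane} {hne : V.Nonempty} {ω : ℝ} (hω : ω ∈ Set.Ioo 0 π) {θ s : ℝ}
    (hs0 : 0 < s) (hsπ : s ≤ π) (h : apex V hne ω θ = apex V hne ω (θ + s)) {y : Plane}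
    (hy : y ∈ convexHull ℝ (V : Set Plane)) (hyx : y ≠ apex V hne ω θ) :
    ∃ r α : ℝ, 0 < r ∧ s ≤ α ∧ α ≤ ω ∧ y - apex V hne ω θ = r • unitVec (θ + α) := by
  have hs : 0 < Real.sin ω := Real.sin_pos_of_pos_of_lt_pi hω.1 hω.2
  obtain ⟨h1, h2⟩ := nf_apex (V := V) (hne := hne) (θ := θ) hs.ne'
  obtain ⟨h3, h4⟩ := nf_apex (V := V) (hne := hne) (θ := θ + s) hs.ne'
  rw [← h] at h3 h4
  have a1 := sup1_le (hne := hne) (θ := θ) hy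
  have a2 := sup2_le (hne := hne) (θ := θ + ω) hy
  have a3 := sup1_le (hne := hne) (θ := θ + s) hy
  have a4 := sup2_le (hne := hne) (θ := θ + s + ω) hy
  obtain ⟨r, β, hr, -, -, e, en⟩ := exists_polar (y - apex V hne ω θ)
  have hr' : 0 < r := by
    rw [← en, norm_pos_iff, sub_ne_zero]; exact hyx
  -- normalise the angle
  obtain ⟨α, ⟨hα1, hα2⟩, k, hk⟩ : ∃ α ∈ Set.Ioc (-π) π, ∃ k : ℤ, α = β - θ + k * (2 * π) := by
    have := toIocMod_mem_Ioc (two_pi_pos) (-π) (β - θ)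
    refine ⟨_, by rw [show -π + 2 * π = π by ring] at this; exact this, -toIocDiv (two_pi_pos) (-π) (β - θ), ?_⟩
    have := toIocMod_add_toIocDiv_zsmul two_pi_pos (-π) (β - θ)
    rw [zsmul_eq_mul] at this
    push_cast; linarith
  have eu : unitVec β = unitVec (θ + α) := by
    rw [← unitVec_int β k]; congr 1; rw [hk]; ring
  rw [eu] at e
  have pos : ∀ γ, 0 ≤ nf γ (y - apex V hne ω θ) → 0 ≤ Real.sin (θ + α - γ) := by
    intro γ hγ
    rw [e, map_smul, nf_unitVec, smul_eq_mul] at hγ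
    exact nonneg_of_mul_nonneg_right hγ hr'
  have neg : ∀ γ, nf γ (y - apex V hne ω θ) ≤ 0 → Real.sin (θ + α - γ) ≤ 0 := by
    intro γ hγ
    rw [e, map_smul, nf_unitVec, smul_eq_mul] at hγ
    exact nonpos_of_mul_nonpos_right hγ hr'
  have b1 := pos θ (by rw [map_sub]; linarith)
  have b2 := neg (θ + ω) (by rw [map_sub]; linarith)
  have b3 := pos (θ + s) (by rw [map_sub]; linarith)
  have b4 := neg (θ + s + ω) (by rw [map_sub]; linarith)
  rw [show θ + α - θ = α by ring] at b1
  rw [show θ + α - (θ + ω) = α - ω by ring] at b2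
  rw [show θ + α - (θ + s) = α - s by ring] at b3
  rw [show θ + α - (θ + s + ω) = α - s - ω by ring] at b4
  obtain ⟨w0, w1⟩ := hω
  have c1 : 0 ≤ α := by
    by_contra hc; push Not at hc
    have := Real.sin_neg_of_neg_of_neg_pi_lt hc hα1
    linarith
  have c2 : α ≤ ω := by
    by_contra hc; push Not at hc
    have := Real.sin_pos_of_pos_of_lt_pi (x := α - ω) (by linarith) (by linarith)
    linarith
  have c3 : s ≤ α := by
    by_contra hc; push Not at hc
    by_cases hh : -π < α - s
    · have := Real.sin_neg_of_neg_of_neg_pi_lt (x := α - s) (by linarith) hh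
      linarith
    · have q : α - s = -π := by linarith
      rw [q, show -π - ω = -(ω + π) by ring, Real.sin_neg, Real.sin_add_pi] at b4
      linarith
  exact ⟨r, α, hr', c3, c2, e⟩

lemma apex_ne {V : Finset Plane} {hne : V.Nonempty} {ω : ℝ} (hω : ω ∈ Set.Ioo 0 π)
    (hna : ∀ v ∈ V, ω ≤ interiorAngle (convexHull ℝ (V : Set Plane)) v) {θ s : ℝ}
    (hs0 : 0 < s) (hsπ : s ≤ π) : apex V hne ω θ ≠ apex V hne ω (θ + s) := by
  intro h
  have hs : 0 < Real.sin ω := Real.sin_pos_of_pos_of_lt_pi hω.1 hω.2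
  obtain ⟨h1, h2⟩ := nf_apex (V := V) (hne := hne) (θ := θ) hs.ne'
  obtain ⟨v, hv, e⟩ := sup1_mem V hne θ
  have hvx : v = apex V hne ω θ := by
    by_contra hvx
    obtain ⟨r, α, hr, ha1, ha2, e'⟩ := polar_mem hω hs0 hsπ h (subset_convexHull ℝ _ hv) hvx
    have z : nf θ (v - apex V hne ω θ) = 0 := by rw [map_sub]; linarith
    rw [e', map_smul, nf_unitVec, smul_eq_mul, add_sub_cancel_left] at z
    have := Real.sin_pos_of_pos_of_lt_pi (x := α) (by linarith) (by linarith [hω.2])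
    have := mul_pos hr this
    linarith
  have hl := hna v hv
  have hu : interiorAngle (convexHull ℝ (V : Set Plane)) v ≤ max 0 (ω - s) := by
    apply Real.sSup_le _ (le_max_left _ _)
    rintro _ ⟨a, ha, b, hb, hav, hbv, rfl⟩
    rw [hvx] at hav hbv
    obtain ⟨r, α, hr, ha1, ha2, ea⟩ := polar_mem hω hs0 hsπ h ha hav
    obtain ⟨r', β, hr', hb1, hb2, eb⟩ := polar_mem hω hs0 hsπ h hb hbv
    apply le_max_of_le_right
    rw [EuclideanGeometry.angle, vsub_eq_sub, vsub_eq_sub, hvx, ea, eb,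
      InnerProductGeometry.angle_smul_left_of_pos _ _ hr,
      InnerProductGeometry.angle_smul_right_of_pos _ _ hr', angle_unitVec,
      show θ + α - (θ + β) = α - β by ring, ← Real.cos_abs]
    have : |α - β| ≤ ω - s := by rw [abs_le]; constructor <;> linarith
    rw [Real.arccos_cos (abs_nonneg _) (by linarith [hω.2])]
    exact this
  have : max 0 (ω - s) < ω := max_lt hω.1 (by linarith)
  linarith

lemma pair_circle {ω : ℝ} (hs : Real.sin ω ≠ 0) (p q : Plane) : ∃ (c : Plane) (ρ κ : ℝ), 0 ≤ ρ ∧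
    ∀ θ, (-(nf (θ + ω) q) / Real.sin ω) • unitVec θ + (nf θ p / Real.sin ω) • unitVec (θ + ω)
      = c + ρ • unitVec (2 * θ + κ) := by
  obtain ⟨ρ, κ, hρ, -, -, e, -⟩ := exists_polar
    (!₂[(Real.sin ω * (q 0 - p 0) - Real.cos ω * (q 1 - p 1)) / (2 * Real.sin ω),
      -(Real.cos ω * (q 0 - p 0) + Real.sin ω * (q 1 - p 1)) / (2 * Real.sin ω)] : Plane)
  refine ⟨!₂[((Real.sin ω * p 0 + Real.cos ω * p 1) - (-Real.sin ω * q 0 + Real.cos ω * q 1)) / (2 * Real.sin ω),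
    -((Real.cos ω * p 0 - Real.sin ω * p 1) - (Real.cos ω * q 0 + Real.sin ω * q 1)) / (2 * Real.sin ω)],
    ρ, κ, hρ, fun θ => ?_⟩
  have e0 := congrArg (fun v : Plane => v 0) e
  have e1 := congrArg (fun v : Plane => v 1) e
  simp at e0 e1
  have t := Real.sin_sq_add_cos_sq θ
  have t2 := Real.sin_sq_add_cos_sq ω
  apply plane_ext
  · simp only [nf_apply, PiLp.add_apply, PiLp.smul_apply, unitVec_zero, smul_eq_mul]
    rw [Real.cos_add (2 * θ), mul_sub, show ρ * (Real.cos (2 * θ) * Real.cos κ) = Real.cos (2 * θ) * (ρ * Real.cos κ) by ring,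
      show ρ * (Real.sin (2 * θ) * Real.sin κ) = Real.sin (2 * θ) * (ρ * Real.sin κ) by ring, ← e0, ← e1,
      Real.sin_two_mul, Real.cos_two_mul', Real.sin_add, Real.cos_add]
    simp
    field_simp
    have t' : Real.sin θ ^ 2 = 1 - Real.cos θ ^ 2 := by linarith
    ring_nf
    simp only [t']
    ring
  · simp only [nf_apply, PiLp.add_apply, PiLp.smul_apply, unitVec_one, smul_eq_mul]
    rw [Real.sin_add (2 * θ), mul_add, show ρ * (Real.cos (2 * θ) * Real.sin κ) = Real.cos (2 * θ) * (ρ * Real.sin κ) by ring,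
      show ρ * (Real.sin (2 * θ) * Real.cos κ) = Real.sin (2 * θ) * (ρ * Real.cos κ) by ring, ← e0, ← e1,
      Real.sin_two_mul, Real.cos_two_mul', Real.sin_add, Real.cos_add]
    simp
    field_simp
    have t' : Real.sin θ ^ 2 = 1 - Real.cos θ ^ 2 := by linarith
    ring_nf
    simp only [t']
    ring

lemma circ_countable {c c' : Plane} {r r' : ℝ} (hr : 0 < r) (hr' : 0 ≤ r') (h : ¬ (c = c' ∧ r = r')) :
    {φ : ℝ | ∃ ψ : ℝ, c + r • unitVec φ = c' + r' • unitVec ψ}.Countable := by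
  obtain ⟨ρ, β, hρ, -, -, e, -⟩ := exists_polar (c - c')
  have key : ∀ φ, (∃ ψ : ℝ, c + r • unitVec φ = c' + r' • unitVec ψ) →
      r' ^ 2 = ρ ^ 2 + r ^ 2 + 2 * r * ρ * Real.cos (φ - β) := by
    rintro φ ⟨ψ, hψ⟩
    have e0 := congrArg (fun v : Plane => v 0) e
    have e1 := congrArg (fun v : Plane => v 1) e
    have f0 := congrArg (fun v : Plane => v 0) hψ
    have f1 := congrArg (fun v : Plane => v 1) hψ
    simp at e0 e1 f0 f1
    have g0 : r' * Real.cos ψ = ρ * Real.cos β + r * Real.cos φ := by linarith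
    have g1 : r' * Real.sin ψ = ρ * Real.sin β + r * Real.sin φ := by linarith
    rw [Real.cos_sub]
    have t := Real.sin_sq_add_cos_sq ψ
    have t1 := Real.sin_sq_add_cos_sq β
    have t2 := Real.sin_sq_add_cos_sq φ
    have : r' ^ 2 = (r' * Real.cos ψ) ^ 2 + (r' * Real.sin ψ) ^ 2 := by linear_combination -r' ^ 2 * t
    rw [this, g0, g1]
    linear_combination ρ ^ 2 * t1 + r ^ 2 * t2
  by_cases hρ0 : ρ = 0
  · apply Set.Countable.mono _ Set.countable_empty
    rintro φ hφ
    have := key φ hφ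
    subst hρ0
    exfalso; apply h
    constructor
    · rw [zero_smul, sub_eq_zero] at e; exact e
    · have : r' ^ 2 = r ^ 2 := by simpa using this
      exact ((sq_eq_sq₀ hr' hr.le).mp this).symm
  · by_cases hne : ∃ φ₀, ∃ ψ : ℝ, c + r • unitVec φ₀ = c' + r' • unitVec ψ
    · obtain ⟨φ₀, h₀⟩ := hne
      have k0 := key φ₀ h₀
      apply Set.Countable.mono (s₂ := Set.range (fun k : ℤ => β + (2 * k * π + (φ₀ - β))) ∪
        Set.range (fun k : ℤ => β + (2 * k * π - (φ₀ - β))))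
      · intro φ hφ
        have k1 := key φ hφ
        have : Real.cos (φ₀ - β) = Real.cos (φ - β) := by
          have : 2 * r * ρ ≠ 0 := by positivity
          apply mul_left_cancel₀ this; linarith
        obtain ⟨k, hk | hk⟩ := Real.cos_eq_cos_iff.mp this
        · left; exact ⟨k, by simp only; linarith⟩
        · right; exact ⟨k, by simp only; linarith⟩
      · exact (Set.countable_range _).union (Set.countable_range _)
    · apply Set.Countable.mono _ Set.countable_empty
      intro φ hφ; exact hne ⟨φ, hφ⟩

lemma unitVec_eq {a b : ℝ} (h : unitVec a = unitVec b) : ∃ k : ℤ, a = b + k * (2 * π) := by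
  have e0 := congrArg (fun v : Plane => v 0) h
  have e1 := congrArg (fun v : Plane => v 1) h
  simp at e0 e1
  have : Real.cos (b - a) = 1 := by
    rw [Real.cos_sub, e0, e1]; linarith [Real.sin_sq_add_cos_sq b]
  obtain ⟨k, hk⟩ := (Real.cos_eq_one_iff _).mp this
  exact ⟨-k, by push_cast; linarith⟩

instance fact2pi : Fact (0 < 2 * π) := ⟨two_pi_pos⟩

lemma coe_int_shift (x : ℝ) (k : ℤ) : ((x + k * (2 * π) : ℝ) : AddCircle (2 * π)) = x := by
  rw [AddCircle.coe_add, ← zsmul_eq_mul, AddCircle.coe_zsmul, AddCircle.coe_period, smul_zero, add_zero]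

lemma apex_inj {V : Finset Plane} {hne : V.Nonempty} {ω : ℝ} (hω : ω ∈ Set.Ioo 0 π)
    (hna : ∀ v ∈ V, ω ≤ interiorAngle (convexHull ℝ (V : Set Plane)) v) {a b : ℝ}
    (h : apex V hne ω a = apex V hne ω b) : (a : AddCircle (2 * π)) = b := by
  -- reduce b to a + s with s in (-π, π]
  have hm := toIocMod_mem_Ioc (two_pi_pos) (a - π) b
  set b' := toIocMod (two_pi_pos) (a - π) b with hb'
  have eb : b = b' + (toIocDiv (two_pi_pos) (a - π) b) * (2 * π) := by
    have := toIocMod_add_toIocDiv_zsmul two_pi_pos (a - π) b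
    rw [zsmul_eq_mul] at this
    exact this.symm
  have hper := (apex_periodic V hne ω).int_mul (toIocDiv (two_pi_pos) (a - π) b) b'
  have eb2 : (b : AddCircle (2 * π)) = b' := by
    rw [eb, coe_int_shift]
  rw [eb, hper] at h
  rw [eb2]
  obtain ⟨m1, m2⟩ := hm
  rcases lt_trichotomy b' a with hlt | heq | hgt
  · exfalso
    apply apex_ne (V := V) (hne := hne) hω hna (θ := b') (s := a - b') (by linarith) (by linarith)
    rw [← h]; congr 1; ring
  · rw [heq]
  · exfalso
    apply apex_ne (V := V) (hne := hne) hω hna (θ := a) (s := b' - a) (by linarith) (by linarith)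
    rw [h]; congr 1; ring

lemma arc_lift {V : Finset Plane} {hne : V.Nonempty} {ω : ℝ} (hω : ω ∈ Set.Ioo 0 π)
    (hna : ∀ v ∈ V, ω ≤ interiorAngle (convexHull ℝ (V : Set Plane)) v)
    (A : CircArc) (hr : 0 < A.radius) (hd : 0 < A.delta)
    (hA : A.points ⊆ omegaCloud (convexHull ℝ (V : Set Plane)) ω) :
    ∃ κ : ℝ, ∀ φ ∈ Set.Icc A.start (A.start + A.delta),
      A.center + A.radius • unitVec φ = apex V hne ω (φ / 2 + κ) := by
  have hs : 0 < Real.sin ω := Real.sin_pos_of_pos_of_lt_pi hω.1 hω.2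
  let Xb : AddCircle (2 * π) → Plane := (apex_periodic V hne ω).lift
  have hXb : ∀ t : ℝ, Xb t = apex V hne ω t := fun t => (apex_periodic V hne ω).lift_coe t
  have hXc : Continuous Xb := by
    apply continuous_coinduced_dom.mpr
    exact apex_cont V hne ω
  have hXi : Function.Injective Xb := by
    intro a b h
    induction a using QuotientAddGroup.induction_on with | H a => ?_
    induction b using QuotientAddGroup.induction_on with | H b => ?_
    exact apex_inj hω hna h
  have hemb := hXc.isClosedEmbedding hXi
  have hex : ∀ φ : Set.Icc A.start (A.start + A.delta), ∃ t : ℝ,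
      apex V hne ω t = A.center + A.radius • unitVec φ := by
    intro φ
    exact cloud_sub hω (hA ⟨φ, φ.2, rfl⟩)
  choose t ht using hex
  let g : Set.Icc A.start (A.start + A.delta) → AddCircle (2 * π) := fun φ => (t φ : AddCircle (2 * π))
  have hg : Continuous g := by
    rw [hemb.isEmbedding.continuous_iff]
    have : Xb ∘ g = fun φ : Set.Icc A.start (A.start + A.delta) => A.center + A.radius • unitVec φ := by
      funext φ; simp only [Function.comp, g, hXb, ht]
    rw [this]
    have := unitVec_cont
    fun_prop
  let h : Set.Icc A.start (A.start + A.delta) → AddCircle (2 * π) :=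
    fun φ => g φ - (((φ : ℝ) / 2 : ℝ) : AddCircle (2 * π))
  have hh : Continuous h := by
    apply hg.sub
    exact (AddCircle.continuous_mk' _).comp (by fun_prop)
  -- values of h are countable
  choose cc rr kk hrr hck using fun pq : Plane × Plane => pair_circle hs.ne' pq.1 pq.2
  have hcount : (Set.range h).Countable := by
    let bad : Set ℝ := ⋃ pq ∈ ((V ×ˢ V : Finset (Plane × Plane)) : Set (Plane × Plane)),
      {φ | ¬ (A.center = cc pq ∧ A.radius = rr pq) ∧ ∃ ψ : ℝ, A.center + A.radius • unitVec φ = cc pq + rr pq • unitVec ψ}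
    have hbad : bad.Countable := by
      apply (Finset.countable_toSet _).biUnion
      intro pq _
      by_cases hc : A.center = cc pq ∧ A.radius = rr pq
      · apply Set.Countable.mono _ Set.countable_empty
        rintro φ ⟨h1, -⟩; exact h1 hc
      · apply Set.Countable.mono _ (circ_countable hr (hrr pq) hc)
        rintro φ ⟨-, h2⟩; exact h2
    let good : Set (AddCircle (2 * π)) := ⋃ pq ∈ ((V ×ˢ V : Finset (Plane × Plane)) : Set (Plane × Plane)),
      Set.range (fun k : ℤ => ((-kk pq / 2 + k * π : ℝ) : AddCircle (2 * π)))
    have hgood : good.Countable := by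
      apply (Finset.countable_toSet _).biUnion
      intro pq _
      exact Set.countable_range _
    apply Set.Countable.mono (s₂ := good ∪ h '' (Subtype.val ⁻¹' bad))
    · rintro _ ⟨φ, rfl⟩
      obtain ⟨p, hp, e1⟩ := sup1_mem V hne (t φ)
      obtain ⟨q, hq, e2⟩ := sup2_mem V hne (t φ + ω)
      have hmem : (p, q) ∈ ((V ×ˢ V : Finset (Plane × Plane)) : Set (Plane × Plane)) := by
        simp [hp, hq]
      have e3 := hck (p, q) (t φ)
      simp only at e3
      have e4 : A.center + A.radius • unitVec φ = cc (p, q) + rr (p, q) • unitVec (2 * t φ + kk (p, q)) := by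
        rw [← e3, ← ht φ, apex, e1, e2]
      by_cases hc : A.center = cc (p, q) ∧ A.radius = rr (p, q)
      · left
        rw [← hc.1, ← hc.2] at e4
        have e5 := smul_right_injective _ hr.ne' (add_left_cancel e4)
        obtain ⟨k, hk⟩ := unitVec_eq e5
        refine Set.mem_biUnion hmem ⟨-k, ?_⟩
        simp only [h, g]
        rw [← AddCircle.coe_sub]
        congr 1
        push_cast
        linarith
      · right
        refine ⟨φ, ?_, rfl⟩
        exact Set.mem_biUnion hmem ⟨hc, _, e4⟩
    · refine hgood.union (Set.Countable.image ?_ _)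
      exact hbad.preimage Subtype.val_injective
  have : PreconnectedSpace (Set.Icc A.start (A.start + A.delta)) :=
    isPreconnected_iff_preconnectedSpace.mp isPreconnected_Icc
  have hsub : (Set.range h).Subsingleton :=
    hcount.isTotallyDisconnected _ subset_rfl (isPreconnected_range hh)
  let φ₀ : Set.Icc A.start (A.start + A.delta) := ⟨A.start, by simp; linarith⟩
  refine ⟨t φ₀ - φ₀ / 2, fun φ hφ => ?_⟩
  have e := hsub ⟨⟨φ, hφ⟩, rfl⟩ ⟨φ₀, rfl⟩
  have e2 : g ⟨φ, hφ⟩ = ((φ / 2 + (t φ₀ - φ₀ / 2) : ℝ) : AddCircle (2 * π)) := by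
    rw [sub_eq_iff_eq_add.mp e]
    simp only [h, g]
    rw [← AddCircle.coe_sub, ← AddCircle.coe_add]
    congr 1; ring
  rw [← hXb, ← e2]
  simp only [g]
  rw [hXb, ht]

lemma circ_measure {m : ℕ} (a d : Fin m → ℝ) (hd : ∀ i, 0 < d i) (hd2 : ∀ i, d i < 2 * π)
    (hcov : ∀ θ : ℝ, ∃ i, ∃ φ ∈ Set.Icc (a i) (a i + d i), (φ : AddCircle (2 * π)) = θ)
    (hdisj : ∀ i j, i ≠ j → ∀ φ ∈ Set.Ioo (a i) (a i + d i), ∀ ψ ∈ Set.Ioo (a j) (a j + d j),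
      (φ : AddCircle (2 * π)) ≠ ψ) : ∑ i, d i = 2 * π := by
  apply le_antisymm
  · have key : ∀ l ∈ Set.Ioo (0:ℝ) 1, l * ∑ i, d i ≤ 2 * π := by
      intro l hl
      have hpd : Pairwise (fun i j => Disjoint
          (Metric.closedBall ((a i + d i / 2 : ℝ) : AddCircle (2 * π)) (l * d i / 2))
          (Metric.closedBall ((a j + d j / 2 : ℝ) : AddCircle (2 * π)) (l * d j / 2))) := by
        have rep : ∀ i (x : AddCircle (2 * π)),
            x ∈ Metric.closedBall ((a i + d i / 2 : ℝ) : AddCircle (2 * π)) (l * d i / 2) →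
            ∃ φ ∈ Set.Ioo (a i) (a i + d i), (φ : AddCircle (2 * π)) = x := by
          intro i x hx
          induction x using QuotientAddGroup.induction_on with | H x => ?_
          have hx' : x ∈ ((↑) : ℝ → AddCircle (2 * π)) ⁻¹' Metric.closedBall ((a i + d i / 2 : ℝ) : AddCircle (2 * π)) (l * d i / 2) := hx
          rw [AddCircle.coe_real_preimage_closedBall_eq_iUnion, Set.mem_iUnion] at hx'
          obtain ⟨k, hk⟩ := hx'
          rw [Metric.mem_closedBall, Real.dist_eq, abs_le] at hk
          have : l * d i < 1 * d i := mul_lt_mul_of_pos_right hl.2 (hd i)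
          simp only [zsmul_eq_mul] at hk
          refine ⟨x - k * (2 * π), ⟨by linarith, by linarith⟩, ?_⟩
          have := coe_int_shift x (-k)
          push_cast at this
          rw [neg_mul, ← sub_eq_add_neg] at this
          exact this
        intro i j hij
        rw [Set.disjoint_left]
        intro x hx hy
        obtain ⟨φ, h1, rfl⟩ := rep i x hx
        obtain ⟨ψ, h2, e⟩ := rep j _ hy
        exact hdisj i j hij φ h1 ψ h2 e.symm
      have h1 : MeasureTheory.volume (⋃ i, Metric.closedBall ((a i + d i / 2 : ℝ) : AddCircle (2 * π)) (l * d i / 2))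
          = ∑ i, ENNReal.ofReal (l * d i) := by
        rw [MeasureTheory.measure_iUnion hpd (fun i => Metric.isClosed_closedBall.measurableSet), tsum_fintype]
        apply Finset.sum_congr rfl
        intro i _
        rw [AddCircle.volume_closedBall]
        congr 1
        have : l * d i < 1 * d i := mul_lt_mul_of_pos_right hl.2 (hd i)
        rw [min_eq_right]
        · ring
        · linarith [hd2 i]
      have h2 := MeasureTheory.measure_mono (μ := MeasureTheory.volume) (Set.subset_univ (⋃ i, Metric.closedBall ((a i + d i / 2 : ℝ) : AddCircle (2 * π)) (l * d i / 2)))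
      rw [h1, AddCircle.measure_univ, ← ENNReal.ofReal_sum_of_nonneg (fun i _ => (mul_pos hl.1 (hd i)).le),
        ENNReal.ofReal_le_ofReal_iff two_pi_pos.le, ← Finset.mul_sum] at h2
      exact h2
    by_contra hc
    push Not at hc
    have hS : 0 < ∑ i, d i := lt_trans two_pi_pos hc
    obtain ⟨l, l1, l2⟩ := exists_between ((div_lt_one hS).mpr hc)
    have := key l ⟨lt_trans (div_pos two_pi_pos hS) l1, l2⟩
    rw [div_lt_iff₀ hS] at l1
    linarith
  · have hc : (Set.univ : Set (AddCircle (2 * π))) ⊆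
        ⋃ i, Metric.closedBall ((a i + d i / 2 : ℝ) : AddCircle (2 * π)) (d i / 2) := by
      intro x _
      induction x using QuotientAddGroup.induction_on with | H x => ?_
      obtain ⟨i, φ, hφ, e⟩ := hcov x
      refine Set.mem_iUnion.mpr ⟨i, ?_⟩
      change (x : AddCircle (2 * π)) ∈ _
      rw [← e]
      have : φ ∈ ((↑) : ℝ → AddCircle (2 * π)) ⁻¹' Metric.closedBall ((a i + d i / 2 : ℝ) : AddCircle (2 * π)) (d i / 2) := by
        rw [AddCircle.coe_real_preimage_closedBall_eq_iUnion, Set.mem_iUnion]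
        refine ⟨0, ?_⟩
        rw [Metric.mem_closedBall, Real.dist_eq, abs_le, zero_smul]
        constructor <;> linarith [hφ.1, hφ.2]
      exact this
    have h2 := (MeasureTheory.measure_mono (μ := MeasureTheory.volume) hc).trans (MeasureTheory.measure_iUnion_le _)
    rw [AddCircle.measure_univ, tsum_fintype] at h2
    have h3 : ∑ i, MeasureTheory.volume (Metric.closedBall ((a i + d i / 2 : ℝ) : AddCircle (2 * π)) (d i / 2))
        = ENNReal.ofReal (∑ i, d i) := by
      rw [ENNReal.ofReal_sum_of_nonneg (fun i _ => (hd i).le)]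
      apply Finset.sum_congr rfl
      intro i _
      rw [AddCircle.volume_closedBall]
      congr 1
      rw [min_eq_right]
      · ring
      · linarith [hd2 i]
    rw [h3, ENNReal.ofReal_le_ofReal_iff (Finset.sum_nonneg fun i _ => (hd i).le)] at h2
    exact h2

/-- If no vertex of the convex polygon has interior angle less than `ω`, then the sum of the
angular measures of all arcs constituting the `ω`-cloud equals `4π`. -/
theorem stmt_5 (V : Finset Plane) (hV : IsConvexPolygon V) (ω : ℝ) (hω : ω ∈ Set.Ioo 0 π)
    (hna : ∀ v ∈ V, ω ≤ interiorAngle (convexHull ℝ (V : Set Plane)) v)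
    (m : ℕ) (arcs : Fin m → CircArc)
    (hprop : ∀ i, 0 < (arcs i).radius ∧ 0 < (arcs i).delta)
    (hcover : (⋃ i, (arcs i).points) = omegaCloud (convexHull ℝ (V : Set Plane)) ω)
    (hdisj : ∀ i j, i ≠ j → Disjoint (arcs i).intPoints (arcs j).intPoints) :
    ∑ i, (arcs i).delta = 4 * π := by
  have hne : V.Nonempty := by
    rw [← Finset.card_pos]; have := hV.1; omega
  have hsub : ∀ i, (arcs i).points ⊆ omegaCloud (convexHull ℝ (V : Set Plane)) ω := by
    intro i; rw [← hcover]; exact Set.subset_iUnion (fun i => (arcs i).points) i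
  choose κ hκ using fun i => arc_lift (hne := hne) hω hna (arcs i) (hprop i).1 (hprop i).2 (hsub i)
  have hlt : ∀ i, (arcs i).delta < 2 * π := by
    intro i
    by_contra hc
    push Not at hc
    have hp := Real.pi_pos
    have e1 := hκ i (arcs i).start ⟨le_rfl, by linarith⟩
    have e2 := hκ i ((arcs i).start + 2 * π) ⟨by linarith, by linarith⟩
    have e3 : unitVec ((arcs i).start + 2 * π) = unitVec (arcs i).start := by
      simpa using unitVec_int (arcs i).start 1
    rw [e3, e1] at e2
    apply apex_ne (V := V) (hne := hne) hω hna hp le_rfl (e2.trans _)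
    congr 1; ring
  have hfin := circ_measure (fun i => (arcs i).start / 2 + κ i) (fun i => (arcs i).delta / 2)
    (fun i => by have := (hprop i).2; linarith)
    (fun i => by have := (hprop i).2; have := hlt i; linarith) ?_ ?_
  · rw [← Finset.sum_div] at hfin
    linarith
  · intro θ
    have h1 := apex_minWedge (V := V) (hne := hne) hω θ
    rw [← hcover, Set.mem_iUnion] at h1
    obtain ⟨i, φ, hφ, e⟩ := h1
    rw [hκ i φ hφ] at e
    exact ⟨i, φ / 2 + κ i, ⟨by linarith [hφ.1], by linarith [hφ.2]⟩, (apex_inj hω hna e).symm⟩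
  · intro i j hij φ hφ ψ hψ e
    have m1 : 2 * (φ - κ i) ∈ Set.Ioo (arcs i).start ((arcs i).start + (arcs i).delta) :=
      ⟨by linarith [hφ.1], by linarith [hφ.2]⟩
    have m2 : 2 * (ψ - κ j) ∈ Set.Ioo (arcs j).start ((arcs j).start + (arcs j).delta) :=
      ⟨by linarith [hψ.1], by linarith [hψ.2]⟩
    have e1 := hκ i _ (Set.Ioo_subset_Icc_self m1)
    have e2 := hκ j _ (Set.Ioo_subset_Icc_self m2)
    rw [show 2 * (φ - κ i) / 2 + κ i = φ by ring] at e1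
    rw [show 2 * (ψ - κ j) / 2 + κ j = ψ by ring] at e2
    have e3 : apex V hne ω φ = apex V hne ω ψ := by
      rw [← (apex_periodic V hne ω).lift_coe φ, ← (apex_periodic V hne ω).lift_coe ψ, e]
    exact Set.disjoint_left.mp (hdisj i j hij) ⟨_, m1, rfl⟩ ⟨_, m2, by rw [e1, e3, e2]⟩

end
end

section
/- The maximal ω-cloud of a convex polygon P is a full circle C if and only if k = π/(π−ω) is a positive integer and P is a regular k-gon inscribed in C. -/
open EuclideanGeometry Real Set
open scoped Classical

noncomputable section

def dt (z : Plane) (a : ℝ) : ℝ := z 0 * cos a + z 1 * sin a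

@[simp] lemma uv0 (t : ℝ) : unitVec t 0 = cos t := by simp [unitVec]
@[simp] lemma uv1 (t : ℝ) : unitVec t 1 = sin t := by simp [unitVec]

lemma dt_sub (x y : Plane) (a : ℝ) : dt (x - y) a = dt x a - dt y a := by
  simp [dt]; ring

lemma dt_circ (r t a : ℝ) : dt (r • unitVec t) a = r * cos (a - t) := by
  simp [dt, cos_sub]; ring

lemma nsq (z : Plane) : ‖z‖ ^ 2 = z 0 ^ 2 + z 1 ^ 2 := by
  rw [EuclideanSpace.real_norm_sq_eq, Fin.sum_univ_two]

lemma nsq_dt (z : Plane) (a d : ℝ) :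
    ‖z‖ ^ 2 * sin d ^ 2 = dt z a ^ 2 + dt z (a + d) ^ 2 - 2 * dt z a * dt z (a + d) * cos d := by
  rw [nsq]; simp only [dt, cos_add, sin_add]
  have h1 := sin_sq_add_cos_sq a
  have h2 := sin_sq_add_cos_sq d
  have e1 : cos a ^ 2 = 1 - sin a ^ 2 := by linarith
  have e2 : cos d ^ 2 = 1 - sin d ^ 2 := by linarith
  grind

lemma polar (a b : ℝ) : ∃ ρ θ : ℝ, 0 ≤ ρ ∧ a = ρ * cos θ ∧ b = ρ * sin θ := by
  refine ⟨‖(⟨a, b⟩ : ℂ)‖, Complex.arg ⟨a, b⟩, norm_nonneg _, ?_, ?_⟩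
  · rw [Complex.norm_mul_cos_arg]
  · rw [Complex.norm_mul_sin_arg]

lemma polar_unit (z : Plane) (r : ℝ) (hr : 0 < r) (h : ‖z‖ = r) : ∃ θ, z = r • unitVec θ := by
  obtain ⟨ρ, θ, h0, h1, h2⟩ := polar (z 0) (z 1)
  have h3 : ‖z‖ ^ 2 = ρ ^ 2 := by
    rw [nsq, h1, h2]; linear_combination ρ ^ 2 * sin_sq_add_cos_sq θ
  have h4 : r = ρ := by
    rw [h] at h3
    exact (pow_left_inj₀ hr.le h0 two_ne_zero).1 h3
  subst h4
  exact ⟨θ, plane_ext (by simpa using h1) (by simpa using h2)⟩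

/-- support-line formulation -/
def Apx (V : Finset Plane) (d : ℝ) (x : Plane) (a : ℝ) : Prop :=
  (∀ v ∈ V, dt (v - x) a ≤ 0) ∧ (∀ v ∈ V, dt (v - x) (a + d) ≤ 0) ∧
  (∃ v ∈ V, dt (v - x) a = 0) ∧ (∃ v ∈ V, dt (v - x) (a + d) = 0)

lemma dt_lin (a : ℝ) : IsLinearMap ℝ (fun z => dt z a) :=
  ⟨fun x y => by simp [dt]; ring, fun c x => by simp [dt]; ring⟩

lemma hull_le (V : Finset Plane) (x : Plane) (a : ℝ) (h : ∀ v ∈ V, dt (v - x) a ≤ 0) :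
    ∀ p ∈ convexHull ℝ (V : Set Plane), dt (p - x) a ≤ 0 := by
  have : convexHull ℝ (V : Set Plane) ⊆ {z | dt z a ≤ dt x a} :=
    convexHull_min (fun v hv => by have := h v hv; rw [dt_sub] at this; simp; linarith)
      (convex_halfSpace_le (dt_lin a) _)
  intro p hp
  have := this hp
  rw [dt_sub]; simp at this; linarith

lemma hull_lt (V : Finset Plane) (x : Plane) (a : ℝ) (h : ∀ v ∈ V, dt (v - x) a < 0) :
    ∀ p ∈ convexHull ℝ (V : Set Plane), dt (p - x) a < 0 := by
  have : convexHull ℝ (V : Set Plane) ⊆ {z | dt z a < dt x a} :=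
    convexHull_min (fun v hv => by have := h v hv; rw [dt_sub] at this; simp; linarith)
      (convex_halfSpace_lt (dt_lin a) _)
  intro p hp
  have := this hp
  rw [dt_sub]; simp at this; linarith

lemma basis_eq (z : Plane) (a d : ℝ) (hd : sin d ≠ 0) :
    z = (-dt z a / sin d) • unitVec (a + d + π / 2) + (-dt z (a + d) / sin d) • unitVec (a - π / 2) := by
  have h1 := sin_sq_add_cos_sq a
  have e1 : cos a ^ 2 = 1 - sin a ^ 2 := by linarith
  apply plane_ext
  · simp only [PiLp.add_apply, PiLp.smul_apply, smul_eq_mul, uv0, cos_add_pi_div_two, cos_sub_pi_div_two]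
    simp only [dt, cos_add, sin_add]
    field_simp
    grind
  · simp only [PiLp.add_apply, PiLp.smul_apply, smul_eq_mul, uv1, sin_add_pi_div_two, sin_sub_pi_div_two]
    simp only [dt, cos_add, sin_add]
    field_simp
    grind

lemma dt_comb (s t a d : ℝ) :
    dt (s • unitVec (a + d + π / 2) + t • unitVec (a - π / 2)) a = -s * sin d ∧
    dt (s • unitVec (a + d + π / 2) + t • unitVec (a - π / 2)) (a + d) = -t * sin d := by
  have h1 := sin_sq_add_cos_sq a
  have e1 : cos a ^ 2 = 1 - sin a ^ 2 := by linarith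
  have h2 := sin_sq_add_cos_sq d
  have e2 : cos d ^ 2 = 1 - sin d ^ 2 := by linarith
  constructor <;>
  · simp only [dt, PiLp.add_apply, PiLp.smul_apply, smul_eq_mul, uv0, uv1, cos_add_pi_div_two,
      cos_sub_pi_div_two, sin_add_pi_div_two, sin_sub_pi_div_two]
    simp only [cos_add, sin_add]
    grind

lemma wedge_apx (V : Finset Plane) (d : ℝ) (hd : d ∈ Ioo 0 π) (x : Plane) (a : ℝ) :
    Apx V d x a ↔ (convexHull ℝ (V : Set Plane) ⊆ wedgeSet x (unitVec (a + d + π / 2)) (unitVec (a - π / 2)) ∧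
      (convexHull ℝ (V : Set Plane) ∩ ray x (unitVec (a + d + π / 2))).Nonempty ∧
      (convexHull ℝ (V : Set Plane) ∩ ray x (unitVec (a - π / 2))).Nonempty) := by
  have hs : 0 < sin d := sin_pos_of_mem_Ioo hd
  constructor
  · rintro ⟨h1, h2, ⟨v, hv, hv0⟩, ⟨w, hw, hw0⟩⟩
    refine ⟨?_, ⟨w, subset_convexHull ℝ _ hw, -dt (w - x) a / sin d, ?_, ?_⟩,
      ⟨v, subset_convexHull ℝ _ hv, -dt (v - x) (a + d) / sin d, ?_, ?_⟩⟩
    · intro p hp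
      refine ⟨-dt (p - x) a / sin d, -dt (p - x) (a + d) / sin d, ?_, ?_, ?_⟩
      · have := hull_le V x a h1 p hp
        exact div_nonneg (by linarith) hs.le
      · have := hull_le V x _ h2 p hp
        exact div_nonneg (by linarith) hs.le
      · rw [add_assoc, ← basis_eq _ _ _ hs.ne']; simp
    · exact div_nonneg (by linarith [h1 w hw]) hs.le
    · have := basis_eq (w - x) a d hs.ne'
      rw [hw0] at this
      simp only [neg_zero, zero_div, zero_smul, add_zero] at this
      rw [← this]; simp
    · exact div_nonneg (by linarith [h2 v hv]) hs.le
    · have := basis_eq (v - x) a d hs.ne'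
      rw [hv0] at this
      simp only [neg_zero, zero_div, zero_smul, zero_add] at this
      rw [← this]; simp
  · rintro ⟨h1, ⟨w, hw, s, hs0, hws⟩, ⟨v, hv, t, ht0, hvt⟩⟩
    have key : ∀ p ∈ convexHull ℝ (V : Set Plane), dt (p - x) a ≤ 0 ∧ dt (p - x) (a + d) ≤ 0 := by
      intro p hp
      obtain ⟨s, t, hs', ht', e⟩ := h1 hp
      have e' : p - x = s • unitVec (a + d + π / 2) + t • unitVec (a - π / 2) := by
        rw [e]; abel
      rw [e', (dt_comb s t a d).1, (dt_comb s t a d).2]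
      constructor <;> nlinarith
    refine ⟨fun v hv => (key v (subset_convexHull ℝ _ hv)).1,
      fun v hv => (key v (subset_convexHull ℝ _ hv)).2, ?_, ?_⟩
    · by_contra! hc
      have := hull_lt V x a (fun v hv => lt_of_le_of_ne (key v (subset_convexHull ℝ _ hv)).1 (hc v hv)) v hv
      have e' : v - x = (0:ℝ) • unitVec (a + d + π / 2) + t • unitVec (a - π / 2) := by
        rw [hvt]; simp
      rw [e', (dt_comb 0 t a d).1] at this
      simp at this
    · by_contra! hc
      have := hull_lt V x (a + d) (fun v hv => lt_of_le_of_ne (key v (subset_convexHull ℝ _ hv)).2 (hc v hv)) w hw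
      have e' : w - x = s • unitVec (a + d + π / 2) + (0:ℝ) • unitVec (a - π / 2) := by
        rw [hws]; simp
      rw [e', (dt_comb s 0 a d).2] at this
      simp at this

lemma norm_uv (t : ℝ) : ‖unitVec t‖ = 1 := by
  have : ‖unitVec t‖ ^ 2 = 1 ^ 2 := by rw [nsq]; simp
  exact (pow_left_inj₀ (norm_nonneg _) zero_le_one two_ne_zero).1 this

lemma inner_uv (s t : ℝ) : inner ℝ (unitVec s) (unitVec t) = cos (s - t) := by
  simp [PiLp.inner_apply, Fin.sum_univ_two, cos_sub]; ring

lemma wedgeSet_comm (x a b : Plane) : wedgeSet x a b = wedgeSet x b a := by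
  ext y
  constructor <;>
  · rintro ⟨s, t, h1, h2, e⟩
    exact ⟨t, s, h2, h1, by rw [e]; abel⟩

lemma uv_add (t : ℝ) (n : ℤ) : unitVec (t + n * (2 * π)) = unitVec t :=
  plane_ext (by simp) (by simp)

lemma cloud_iff (V : Finset Plane) (ω : ℝ) (hω : ω ∈ Ioo 0 π) (x : Plane) :
    x ∈ omegaCloud (convexHull ℝ (V : Set Plane)) ω ↔ ∃ a, Apx V (π - ω) x a := by
  have hd : π - ω ∈ Ioo 0 π := ⟨by linarith [hω.2], by linarith [hω.1]⟩
  constructor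
  · rintro ⟨d1, d2, n1, n2, ang, h1, h2, h3⟩
    obtain ⟨s, hs⟩ := polar_unit d1 1 one_pos n1
    obtain ⟨t, ht⟩ := polar_unit d2 1 one_pos n2
    rw [one_smul] at hs ht
    subst hs ht
    have hc : cos (s - t) = cos ω := by
      rw [← ang, InnerProductGeometry.cos_angle, inner_uv, norm_uv, norm_uv]; simp
    obtain ⟨n, hn⟩ := Real.cos_eq_cos_iff.1 hc
    rcases hn with hn | hn
    · -- ω = 2nπ + (s - t) 
      have e1 : unitVec s = unitVec (s + π / 2 - π / 2) := by congr 1; ring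
      have e2 : unitVec t = unitVec (s + π / 2 + (π - ω) + π / 2) := by
        rw [← uv_add t (-n + 1)]
        congr 1; push_cast; linarith
      refine ⟨s + π / 2, (wedge_apx V _ hd x _).2 ?_⟩
      rw [← e1, ← e2, wedgeSet_comm]
      exact ⟨h1, h3, h2⟩
    · have e1 : unitVec t = unitVec (t + π / 2 - π / 2) := by congr 1; ring
      have e2 : unitVec s = unitVec (t + π / 2 + (π - ω) + π / 2) := by
        rw [← uv_add s (-n + 1)]
        congr 1; push_cast; linarith
      refine ⟨t + π / 2, (wedge_apx V _ hd x _).2 ?_⟩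
      rw [← e1, ← e2]
      exact ⟨h1, h2, h3⟩
  · rintro ⟨a, ha⟩
    refine ⟨_, _, norm_uv _, norm_uv _, ?_, (wedge_apx V _ hd x a).1 ha⟩
    rw [InnerProductGeometry.angle, inner_uv, norm_uv, norm_uv]
    have : cos (a + (π - ω) + π / 2 - (a - π / 2)) = cos ω := by
      rw [show a + (π - ω) + π / 2 - (a - π / 2) = 2 * π - ω by ring, cos_two_pi_sub]
    rw [this]; simp
    exact arccos_cos hω.1.le hω.2.le

lemma near_max (d : ℝ) (k : ℕ) (hk : 0 < k) (hkd : k * d = π) (s : ℝ) (h1 : -d ≤ s) (h2 : s ≤ d) (m : ℤ) :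
    cos (s - 2 * d * m) ≤ cos s := by
  have hk' : (0:ℝ) < k := by exact_mod_cast hk
  have hd : 0 < d := by
    by_contra! h
    nlinarith [pi_pos]
  have hkz : (0:ℤ) < k := by exact_mod_cast hk
  obtain ⟨q, m', hm, hm0, hmk⟩ : ∃ q m' : ℤ, m = k * q + m' ∧ 0 ≤ m' ∧ m' < k :=
    ⟨m / k, m % k, (Int.mul_ediv_add_emod m k).symm, Int.emod_nonneg _ hkz.ne', Int.emod_lt_of_pos _ hkz⟩
  have e : cos (s - 2 * d * m) = cos (s - 2 * d * m') := by
    rw [← cos_add_int_mul_two_pi (s - 2 * d * m) q]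
    congr 1
    rw [hm, ← hkd]; push_cast; ring
  rw [e]
  rcases hm0.eq_or_lt with h | h
  · rw [← h]; simp
  have a1 : (1:ℝ) ≤ m' := by exact_mod_cast h
  have a2 : (m':ℝ) + 1 ≤ k := by exact_mod_cast hmk
  have a3 : d * m' + d ≤ π := by rw [← hkd]; nlinarith
  have a4 : d ≤ d * m' := by nlinarith
  have e2 : cos s - cos (s - 2 * d * m') = 2 * sin (d * m' - s) * sin (d * m') := by
    rw [cos_sub_cos, show (s + (s - 2 * d * m')) / 2 = -(d * m' - s) by ring, sin_neg,
      show (s - (s - 2 * d * m')) / 2 = d * m' by ring]; ring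
  have := sin_nonneg_of_nonneg_of_le_pi (x := d * m' - s) (by linarith) (by linarith)
  have := sin_nonneg_of_nonneg_of_le_pi (x := d * m') (by linarith) (by linarith)
  have : 0 ≤ 2 * sin (d * m' - s) * sin (d * m') := by positivity
  linarith

lemma circ_id (s d : ℝ) : cos s ^ 2 + cos (s + d) ^ 2 - 2 * cos s * cos (s + d) * cos d = sin d ^ 2 := by
  have h1 := sin_sq_add_cos_sq s
  have h2 := sin_sq_add_cos_sq d
  have e1 : cos s ^ 2 = 1 - sin s ^ 2 := by linarith
  have e2 : cos d ^ 2 = 1 - sin d ^ 2 := by linarith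
  rw [cos_add]; grind

lemma circ_id' (s d : ℝ) : cos s ^ 2 + cos (s - d) ^ 2 - 2 * cos s * cos (s - d) * cos d = sin d ^ 2 := by
  have := circ_id s (-d)
  rw [cos_neg, sin_neg, ← sub_eq_add_neg] at this
  linarith [neg_sq (sin d)]

lemma backward (V : Finset Plane) (ω : ℝ) (hω : ω ∈ Set.Ioo 0 π) (c : Plane) (r : ℝ) (hr : 0 < r)
    (k : ℕ) (hk : (k : ℝ) = π / (π - ω)) (θ₀ : ℝ)
    (hV : (V : Set Plane) =
          {p | ∃ i : Fin k, p = c + r • unitVec (θ₀ + 2 * π * ((i : ℕ) : ℝ) / (k : ℝ))}) :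
    omegaCloud (convexHull ℝ (V : Set Plane)) ω = Metric.sphere c r := by
  obtain ⟨d, hd⟩ : ∃ d, d = π - ω := ⟨_, rfl⟩
  have hd0 : 0 < d := by linarith [hω.2]
  have hdp : d < π := by linarith [hω.1]
  rw [← hd] at hk
  have hs : 0 < sin d := sin_pos_of_pos_of_lt_pi hd0 hdp
  have hk' : (0:ℝ) < k := by rw [hk]; positivity
  have hk0 : 0 < k := by exact_mod_cast hk'
  have hkd : k * d = π := by rw [hk]; field_simp
  have hkz : (0:ℤ) < k := by exact_mod_cast hk0
  have ex : ∀ v ∈ V, ∃ n : ℤ, v = c + r • unitVec (θ₀ + 2 * d * n) := by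
    intro v hv
    have : v ∈ (V : Set Plane) := hv
    rw [hV] at this
    obtain ⟨i, rfl⟩ := this
    refine ⟨(i : ℕ), ?_⟩
    rw [← hkd]; congr 3; push_cast; field_simp
  have mem : ∀ n : ℤ, c + r • unitVec (θ₀ + 2 * d * n) ∈ V := by
    intro n
    have : c + r • unitVec (θ₀ + 2 * d * n) ∈ (V : Set Plane) := by
      rw [hV]
      have h0 := Int.emod_nonneg n hkz.ne'
      have h1 := Int.emod_lt_of_pos n hkz
      have h2 := Int.mul_ediv_add_emod n k
      obtain ⟨m, hm⟩ := Int.eq_ofNat_of_zero_le h0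
      refine ⟨⟨m, by omega⟩, ?_⟩
      rw [hm] at h2
      have h3 : (n : ℝ) = k * (n / k : ℤ) + m := by exact_mod_cast h2.symm
      rw [← uv_add (θ₀ + 2 * π * _ / _) (n / k)]
      congr 3
      rw [h3]
      simp only
      field_simp
      rw [← hkd]; ring
    exact this
  have dtv : ∀ x : Plane, ∀ (n : ℤ) a, dt (c + r • unitVec (θ₀ + 2 * d * n) - x) a
      = r * cos (a - θ₀ - 2 * d * n) - dt (x - c) a := by
    intro x n a
    rw [show c + r • unitVec (θ₀ + 2 * d * n) - x = r • unitVec (θ₀ + 2 * d * n) - (x - c) by abel,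
      dt_sub, dt_circ, sub_sub a]
  have nm : ∀ (n m : ℤ) (a : ℝ), -d ≤ a - θ₀ - 2 * d * n → a - θ₀ - 2 * d * n ≤ d →
      r * cos (a - θ₀ - 2 * d * m) ≤ r * cos (a - θ₀ - 2 * d * n) := by
    intro n m a h1 h2
    have := near_max d k hk0 hkd _ h1 h2 (m - n)
    apply mul_le_mul_of_nonneg_left _ hr.le
    rw [show a - θ₀ - 2 * d * m = a - θ₀ - 2 * d * n - 2 * d * (m - n : ℤ) by push_cast; ring]
    exact this
  have val : ∀ (x : Plane) (a : ℝ) (n : ℤ), (∀ v ∈ V, dt (v - x) a ≤ 0) → (∃ v ∈ V, dt (v - x) a = 0) →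
      -d ≤ a - θ₀ - 2 * d * n → a - θ₀ - 2 * d * n ≤ d → dt (x - c) a = r * cos (a - θ₀ - 2 * d * n) := by
    rintro x a n h1 ⟨v, hv, h2⟩ h3 h4
    obtain ⟨m, rfl⟩ := ex v hv
    have := h1 _ (mem n)
    rw [dtv] at this h2
    have := nm n m a h3 h4
    linarith
  ext x
  rw [cloud_iff V ω hω, ← hd, mem_sphere_iff_norm]
  constructor
  · rintro ⟨a, h1, h2, h3, h4⟩
    obtain ⟨n, hn⟩ : ∃ n : ℤ, |a - θ₀ - 2 * d * n| ≤ d := by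
      refine ⟨round ((a - θ₀) / (2 * d)), ?_⟩
      have := abs_sub_round ((a - θ₀) / (2 * d))
      have e : a - θ₀ - 2 * d * round ((a - θ₀) / (2 * d)) =
        (2 * d) * ((a - θ₀) / (2 * d) - round ((a - θ₀) / (2 * d))) := by field_simp
      rw [e, abs_mul, abs_of_pos (by positivity : 0 < 2 * d)]
      nlinarith
    rw [abs_le] at hn
    have A := val x a n h1 h3 hn.1 hn.2
    have N := nsq_dt (x - c) a d
    have : ‖x - c‖ ^ 2 * sin d ^ 2 = r ^ 2 * sin d ^ 2 := by
      rcases le_total (a - θ₀ - 2 * d * n) 0 with h | h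
      · have B := val x (a + d) n h2 h4 (by linarith) (by linarith)
        rw [N, A, B, ← circ_id (a - θ₀ - 2 * d * n) d]
        rw [show a + d - θ₀ - 2 * d * n = a - θ₀ - 2 * d * n + d by ring]; ring
      · have B := val x (a + d) (n + 1) h2 h4 (by push_cast; linarith) (by push_cast; linarith)
        rw [N, A, B, ← circ_id' (a - θ₀ - 2 * d * n) d]
        rw [show a + d - θ₀ - 2 * d * (n + 1 : ℤ) = a - θ₀ - 2 * d * n - d by push_cast; ring]; ring
    have := mul_right_cancel₀ (by positivity) this
    exact (pow_left_inj₀ (norm_nonneg _) hr.le two_ne_zero).1 this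
  · intro hx
    obtain ⟨φ, hφ⟩ := polar_unit _ r hr hx
    obtain ⟨n, hn1, hn2⟩ : ∃ n : ℤ, 0 ≤ φ - θ₀ - 2 * d * n ∧ φ - θ₀ - 2 * d * n ≤ 2 * d := by
      refine ⟨⌊(φ - θ₀) / (2 * d)⌋, ?_⟩
      have h1 := Int.floor_le ((φ - θ₀) / (2 * d))
      have h2 := (Int.lt_floor_add_one ((φ - θ₀) / (2 * d))).le
      rw [le_div_iff₀ (by positivity)] at h1
      rw [div_le_iff₀ (by positivity)] at h2
      constructor <;> linarith
    have d1 : ∀ a, dt (x - c) a = r * cos (a - φ) := by intro a; rw [hφ, dt_circ]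
    refine ⟨(φ + θ₀ + 2 * d * n) / 2, ?_⟩
    have c1 : cos ((φ + θ₀ + 2 * d * n) / 2 - φ) = cos ((φ + θ₀ + 2 * d * n) / 2 - θ₀ - 2 * d * n) := by
      rw [← cos_neg]; congr 1; ring
    have c2 : cos ((φ + θ₀ + 2 * d * n) / 2 + d - φ) =
        cos ((φ + θ₀ + 2 * d * n) / 2 + d - θ₀ - 2 * d * (n + 1 : ℤ)) := by
      rw [← cos_neg]; congr 1; push_cast; ring
    refine ⟨fun v hv => ?_, fun v hv => ?_, ⟨_, mem n, ?_⟩, ⟨_, mem (n + 1), ?_⟩⟩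
    · obtain ⟨m, rfl⟩ := ex v hv
      rw [dtv, d1, c1]
      have := nm n m ((φ + θ₀ + 2 * d * n) / 2) (by linarith) (by linarith)
      linarith
    · obtain ⟨m, rfl⟩ := ex v hv
      rw [dtv, d1, c2]
      have := nm (n + 1) m ((φ + θ₀ + 2 * d * n) / 2 + d) (by push_cast; linarith) (by push_cast; linarith)
      linarith
    · rw [dtv, d1, c1]; ring
    · rw [dtv, d1, c2]; ring

/-- the key quadratic identity -/
def Key (V : Finset Plane) (c : Plane) (r d : ℝ) : Prop :=
  ∀ a, ∀ v ∈ V, ∀ w ∈ V, (∀ u ∈ V, dt (u - c) a ≤ dt (v - c) a) →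
    (∀ u ∈ V, dt (u - c) (a + d) ≤ dt (w - c) (a + d)) →
    dt (v - c) a ^ 2 + dt (w - c) (a + d) ^ 2 - 2 * dt (v - c) a * dt (w - c) (a + d) * cos d
      = r ^ 2 * sin d ^ 2

lemma key_of (V : Finset Plane) (ω : ℝ) (hω : ω ∈ Set.Ioo 0 π) (c : Plane) (r : ℝ)
    (h : omegaCloud (convexHull ℝ (V : Set Plane)) ω = Metric.sphere c r) : Key V c r (π - ω) := by
  obtain ⟨d, hd⟩ : ∃ d, d = π - ω := ⟨_, rfl⟩
  rw [← hd]
  intro a v hv w hw h1 h2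
  have hd' : d ∈ Ioo 0 π := ⟨by linarith [hω.2], by linarith [hω.1]⟩
  have hs : 0 < sin d := sin_pos_of_mem_Ioo hd'
  set A := dt (v - c) a with hA
  set B := dt (w - c) (a + d) with hB
  obtain ⟨z, hzA, hzB⟩ : ∃ z : Plane, dt z a = A ∧ dt z (a + d) = B := by
    refine ⟨(-A / sin d) • unitVec (a + d + π / 2) + (-B / sin d) • unitVec (a - π / 2), ?_, ?_⟩
    · rw [(dt_comb _ _ a d).1]; field_simp
    · rw [(dt_comb _ _ a d).2]; field_simp
  have e : ∀ u b, dt (u - (c + z)) b = dt (u - c) b - dt z b := by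
    intro u b; rw [← dt_sub]; congr 1; abel
  have : c + z ∈ Metric.sphere c r := by
    rw [← h, cloud_iff V ω hω, ← hd]
    refine ⟨a, fun u hu => ?_, fun u hu => ?_, ⟨v, hv, ?_⟩, ⟨w, hw, ?_⟩⟩
    · rw [e, hzA]; linarith [h1 u hu]
    · rw [e, hzB]; linarith [h2 u hu]
    · rw [e, hzA]; linarith
    · rw [e, hzB]; linarith
  rw [mem_sphere_iff_norm, add_sub_cancel_left] at this
  have N := nsq_dt z a d
  rw [this, hzA, hzB] at N
  exact N.symm

lemma exists_max (V : Finset Plane) (hV : V.Nonempty) (c : Plane) (a : ℝ) :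
    ∃ v ∈ V, ∀ u ∈ V, dt (u - c) a ≤ dt (v - c) a :=
  V.exists_max_image (fun u => dt (u - c) a) hV

lemma trig3 (p q s x y z : ℝ) (hxy : sin ((x - y) / 2) ≠ 0) (hxz : sin ((x - z) / 2) ≠ 0)
    (hyz : sin ((y - z) / 2) ≠ 0) (h1 : p + q * cos x + s * sin x = 0)
    (h2 : p + q * cos y + s * sin y = 0) (h3 : p + q * cos z + s * sin z = 0) :
    p = 0 ∧ q = 0 ∧ s = 0 := by
  have gen : ∀ x y, sin ((x - y) / 2) ≠ 0 → p + q * cos x + s * sin x = 0 →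
      p + q * cos y + s * sin y = 0 → s * cos ((x + y) / 2) = q * sin ((x + y) / 2) := by
    intro x y hxy h1 h2
    have : q * (cos x - cos y) + s * (sin x - sin y) = 0 := by linarith
    rw [cos_sub_cos, sin_sub_sin] at this
    have : sin ((x - y) / 2) * (s * cos ((x + y) / 2) - q * sin ((x + y) / 2)) = 0 := by linarith
    rcases mul_eq_zero.1 this with h | h
    · exact absurd h hxy
    · linarith
  have g1 := gen x y hxy h1 h2
  have g2 := gen x z hxz h1 h3
  have e : sin ((y - z) / 2) = sin ((x + y) / 2) * cos ((x + z) / 2) - cos ((x + y) / 2) * sin ((x + z) / 2) := by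
    rw [← sin_sub]; congr 1; ring
  have hq : q * sin ((y - z) / 2) = 0 := by rw [e]; linear_combination cos ((x+y)/2) * g2 - cos ((x+z)/2) * g1
  have hs : s * sin ((y - z) / 2) = 0 := by rw [e]; linear_combination sin ((x+y)/2) * g2 - sin ((x+z)/2) * g1
  have hq := (mul_eq_zero.1 hq).resolve_right hyz
  have hs := (mul_eq_zero.1 hs).resolve_right hyz
  subst hq hs
  simpa using h1

lemma alg (v w : Plane) (r d : ℝ) (hd : sin d ≠ 0) (S : Set ℝ) (hS : S.Infinite) (a0 : ℝ)
    (hSI : S ⊆ Ioo a0 (a0 + 1))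
    (h : ∀ a ∈ S, dt v a ^ 2 + dt w (a + d) ^ 2 - 2 * dt v a * dt w (a + d) * cos d
      = r ^ 2 * sin d ^ 2) : v 0 ^ 2 + v 1 ^ 2 = r ^ 2 := by
  obtain ⟨T, hT, hTc⟩ := hS.exists_subset_card_eq 3
  obtain ⟨x, y, z, hxy, hxz, hyz, rfl⟩ := Finset.card_eq_three.1 hTc
  have hx : x ∈ S := hT (by simp)
  have hy : y ∈ S := hT (by simp)
  have hz : z ∈ S := hT (by simp)
  have sn : ∀ x ∈ S, ∀ y ∈ S, x ≠ y → sin ((2 * x - 2 * y) / 2) ≠ 0 := by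
    intro x hx y hy hxy hs
    have := hSI hx
    have := hSI hy
    simp only [mem_Ioo] at *
    have := pi_gt_three
    have := (sin_eq_zero_iff_of_lt_of_lt (by linarith) (by linarith)).1 hs
    exact hxy (by linarith)
  -- rotated w
  set X := w 0 * cos d + w 1 * sin d with hX
  set Y := w 1 * cos d - w 0 * sin d with hY
  have eB : ∀ a, dt w (a + d) = X * cos a + Y * sin a := by
    intro a; simp only [dt, cos_add, sin_add, X, Y]; ring
  clear_value X Y
  obtain ⟨hp, hq, hs⟩ := trig3 (v 0 ^ 2 + v 1 ^ 2 + X ^ 2 + Y ^ 2 - 2 * cos d * (v 0 * X + v 1 * Y) - 2 * r ^ 2 * sin d ^ 2)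
    (v 0 ^ 2 - v 1 ^ 2 + X ^ 2 - Y ^ 2 - 2 * cos d * (v 0 * X - v 1 * Y))
    (2 * v 0 * v 1 + 2 * X * Y - 2 * cos d * (v 0 * Y + v 1 * X)) (2 * x) (2 * y) (2 * z)
    (sn x hx y hy hxy) (sn x hx z hz hxz) (sn y hy z hz hyz) (by
      have := h x hx
      rw [eB] at this; simp only [dt] at this
      rw [cos_two_mul, sin_two_mul]
      have e1 := sin_sq_add_cos_sq x
      linear_combination 2 * this - 2 * (v 1 ^ 2 + Y ^ 2 - 2 * cos d * (v 1 * Y)) * e1) (by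
      have := h y hy
      rw [eB] at this; simp only [dt] at this
      rw [cos_two_mul, sin_two_mul]
      have e1 := sin_sq_add_cos_sq y
      linear_combination 2 * this - 2 * (v 1 ^ 2 + Y ^ 2 - 2 * cos d * (v 1 * Y)) * e1) (by
      have := h z hz
      rw [eB] at this; simp only [dt] at this
      rw [cos_two_mul, sin_two_mul]
      have e1 := sin_sq_add_cos_sq z
      linear_combination 2 * this - 2 * (v 1 ^ 2 + Y ^ 2 - 2 * cos d * (v 1 * Y)) * e1)
  have e2 := sin_sq_add_cos_sq d
  have C : ((⟨X, Y⟩ : ℂ) - ⟨v 0, v 1⟩ * ⟨cos d, sin d⟩) * ((⟨X, Y⟩ : ℂ) - ⟨v 0, v 1⟩ * ⟨cos d, -sin d⟩) = 0 := by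
    apply Complex.ext
    · simp
      linear_combination hq + (v 0 ^ 2 - v 1 ^ 2) * e2
    · simp
      linear_combination hs + 2 * v 0 * v 1 * e2
  have fin : sin d ^ 2 * (v 0 ^ 2 + v 1 ^ 2) = sin d ^ 2 * r ^ 2 := by
    rcases mul_eq_zero.1 C with h | h
    · have h1 := congrArg Complex.re h
      have h2 := congrArg Complex.im h
      simp at h1 h2
      have h1' : X = v 0 * cos d - v 1 * sin d := by linarith
      have h2' : Y = v 0 * sin d + v 1 * cos d := by linarith
      rw [h1', h2'] at hp
      linear_combination hp / 2 + (v 0 ^ 2 + v 1 ^ 2) / 2 * e2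
    · have h1 := congrArg Complex.re h
      have h2 := congrArg Complex.im h
      simp at h1 h2
      have h1' : X = v 0 * cos d + v 1 * sin d := by linarith
      have h2' : Y = -v 0 * sin d + v 1 * cos d := by linarith
      rw [h1', h2'] at hp
      linear_combination hp / 2 + (v 0 ^ 2 + v 1 ^ 2) / 2 * e2
  exact mul_left_cancel₀ (by positivity) fin

lemma exists_dir (V : Finset Plane) (hV : IsConvexPolygon V) (v : Plane) (hv : v ∈ V) :
    ∃ a, ∀ w ∈ V.erase v, dt w a < dt v a := by
  obtain ⟨f, u, h1, h2⟩ := geometric_hahn_banach_point_closed (convex_convexHull ℝ _)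
    ((V.erase v).finite_toSet.isClosed_convexHull ℝ) (hV.2 v hv)
  have hf : ∀ z : Plane, f z = z 0 * f (unitVec 0) + z 1 * f (unitVec (π / 2)) := by
    intro z
    have : z = z 0 • unitVec 0 + z 1 • unitVec (π / 2) := plane_ext (by simp) (by simp)
    conv_lhs => rw [this]
    simp
  obtain ⟨ρ, a, h0, ha, hb⟩ := polar (-f (unitVec 0)) (-f (unitVec (π / 2)))
  have hf' : ∀ z : Plane, f z = -(ρ * dt z a) := by
    intro z; rw [hf, dt]; linear_combination -z 0 * ha - z 1 * hb
  refine ⟨a, fun w hw => ?_⟩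
  have := h2 w (subset_convexHull ℝ _ hw)
  rw [hf'] at this h1
  by_contra! hc
  nlinarith

lemma on_circle (V : Finset Plane) (hV : IsConvexPolygon V) (c : Plane) (r d : ℝ) (hr : 0 < r)
    (hd : sin d ≠ 0) (hK : Key V c r d) (v : Plane) (hv : v ∈ V) : ‖v - c‖ = r := by
  have hne : V.Nonempty := ⟨v, hv⟩
  obtain ⟨a, ha⟩ := exists_dir V hV v hv
  have cont : ∀ w : Plane, Continuous (fun a => dt w a) := by intro w; unfold dt; fun_prop
  have : ∀ᶠ b in nhds a, ∀ w ∈ V.erase v, dt w b < dt v b := by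
    rw [Filter.eventually_all_finset]
    intro w hw
    exact (cont w).continuousAt.eventually_lt (cont v).continuousAt (ha w hw)
  obtain ⟨ε, hε, hb⟩ := Metric.eventually_nhds_iff.1 this
  set J := Ioo a (a + min ε 1) with hJ
  have hJi : J.Infinite := Ioo_infinite (by have := lt_min hε one_pos; linarith)
  have hm : ∀ b ∈ J, ∀ u ∈ V, dt (u - c) b ≤ dt (v - c) b := by
    intro b hbJ u hu
    rw [dt_sub, dt_sub]
    by_cases huv : u = v
    · rw [huv]
    have := hb (y := b) (by
      rw [Real.dist_eq, abs_lt]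
      have := min_le_left ε 1
      constructor <;> linarith [hbJ.1, hbJ.2]) u (Finset.mem_erase.2 ⟨huv, hu⟩)
    linarith
  choose g hg1 hg2 using fun b => exists_max V hne c (b + d)
  obtain ⟨w, hw, hwi⟩ : ∃ w ∈ V, (J ∩ g ⁻¹' {w}).Infinite := by
    by_contra! hc
    apply hJi
    have : J ⊆ ⋃ w ∈ V, (J ∩ g ⁻¹' {w}) := by
      intro b hb
      simp only [mem_iUnion]
      exact ⟨g b, hg1 b, hb, rfl⟩
    exact (V.finite_toSet.biUnion (fun w hw => by simpa using hc w hw)).subset this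
  have := alg (v - c) (w - c) r d hd _ hwi a (by
      intro b hb
      have := min_le_right ε 1
      exact ⟨hb.1.1, by linarith [hb.1.2]⟩) (by
      rintro b ⟨hb1, hb2⟩
      have hb2 : g b = w := hb2
      have := hK b v hv w hw (hm b hb1) (by rw [← hb2]; exact hg2 b)
      exact this)
  rw [← nsq] at this
  exact (pow_left_inj₀ (norm_nonneg _) hr.le two_ne_zero).1 this

lemma gap_empty (V : Finset Plane) (c : Plane) (r d : ℝ) (hr : 0 < r) (hd0 : 0 < d) (hdp : d < π)
    (hK : Key V c r d) (hC : ∀ v ∈ V, ‖v - c‖ = r) (θ : ℝ) (hv : c + r • unitVec θ ∈ V)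
    (τ : ℝ) (h0 : 0 < τ) (h1 : τ < 2 * d) : c + r • unitVec (θ + τ) ∉ V := by
  intro hu
  obtain ⟨w, hw, hwm⟩ := exists_max V ⟨_, hv⟩ c (θ + d)
  have k := hK θ _ hv w hw (by
    intro u hu
    obtain ⟨t, ht⟩ := polar_unit _ r hr (hC u hu)
    rw [ht, add_sub_cancel_left, dt_circ, dt_circ]
    simp
    nlinarith [cos_le_one (θ - t)]) hwm
  have m := hwm _ hu
  rw [add_sub_cancel_left, dt_circ] at k m
  simp only [sub_self, cos_zero, mul_one] at k
  have e2 := sin_sq_add_cos_sq d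
  have : (dt (w - c) (θ + d) - r * cos d) ^ 2 = 0 := by linear_combination k + r ^ 2 * e2
  have : dt (w - c) (θ + d) = r * cos d := by
    have := pow_eq_zero_iff (two_ne_zero) |>.1 this
    linarith
  rw [this] at m
  have m := le_of_mul_le_mul_left m hr
  rw [show θ + d - (θ + τ) = d - τ by ring, ← cos_abs (d - τ)] at m
  have : |d - τ| < d := by rw [abs_lt]; constructor <;> linarith
  have := cos_lt_cos_of_nonneg_of_le_pi (abs_nonneg _) hdp.le this
  linarith

lemma rep (V : Finset Plane) (c : Plane) (r : ℝ) (hr : 0 < r) (hC : ∀ v ∈ V, ‖v - c‖ = r) (θ : ℝ)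
    (v : Plane) (hv : v ∈ V) : ∃ σ, 0 ≤ σ ∧ σ < 2 * π ∧ v = c + r • unitVec (θ + σ) := by
  obtain ⟨t, ht⟩ := polar_unit _ r hr (hC v hv)
  have hp : (0:ℝ) < 2 * π := by positivity
  have h1 := Int.floor_le ((t - θ) / (2 * π))
  have h2 := Int.lt_floor_add_one ((t - θ) / (2 * π))
  rw [le_div_iff₀ hp] at h1
  rw [div_lt_iff₀ hp] at h2
  refine ⟨t - θ - ⌊(t - θ) / (2 * π)⌋ * (2 * π), by linarith, by linarith, ?_⟩
  rw [← uv_add _ ⌊(t - θ) / (2 * π)⌋]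
  rw [show θ + (t - θ - ⌊(t - θ) / (2 * π)⌋ * (2 * π)) + ⌊(t - θ) / (2 * π)⌋ * (2 * π) = t by ring, ← ht]
  abel

lemma next_mem (V : Finset Plane) (hV : 3 ≤ V.card) (c : Plane) (r d : ℝ) (hr : 0 < r) (hd0 : 0 < d) (hdp : d < π)
    (hK : Key V c r d) (hC : ∀ v ∈ V, ‖v - c‖ = r) (θ : ℝ) (hv : c + r • unitVec θ ∈ V) :
    c + r • unitVec (θ + 2 * d) ∈ V := by
  choose! σ hσ0 hσp hσe using rep V c r hr hC θ
  obtain ⟨v', hv', hne⟩ := Finset.exists_mem_ne (by omega : 1 < V.card) (c + r • unitVec θ)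
  obtain ⟨w, hw, hmin⟩ := (V.erase (c + r • unitVec θ)).exists_min_image σ
    ⟨v', Finset.mem_erase.2 ⟨hne, hv'⟩⟩
  obtain ⟨hwne, hwV⟩ := Finset.mem_erase.1 hw
  obtain ⟨τ, hτ⟩ : ∃ τ, τ = σ w := ⟨_, rfl⟩
  have hwe := hσe w hwV
  have hτ0 : 0 < τ := by
    rw [hτ]
    apply lt_of_le_of_ne (hσ0 w hwV)
    intro h
    rw [← h, add_zero] at hwe
    exact hwne hwe
  have hτp := hσp w hwV
  rw [← hτ] at hwe hτp hmin
  have hτd : 2 * d ≤ τ := by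
    by_contra! h
    exact gap_empty V c r d hr hd0 hdp hK hC θ hv τ hτ0 h (hwe ▸ hwV)
  have alt : ∀ u ∈ V, u = c + r • unitVec θ ∨ ∃ s, τ ≤ s ∧ s < 2 * π ∧ u = c + r • unitVec (θ + s) := by
    intro u hu
    by_cases h : u = c + r • unitVec θ
    · exact Or.inl h
    · exact Or.inr ⟨σ u, hmin u (Finset.mem_erase.2 ⟨h, hu⟩), hσp u hu, hσe u hu⟩
  have sp : ∀ x, 0 ≤ x → x ≤ π → 0 ≤ sin x := fun x => sin_nonneg_of_nonneg_of_le_pi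
  have k := hK (θ + (τ - d) / 2) _ hv w hwV (by
    intro u hu
    rcases alt u hu with rfl | ⟨s, h1, h2, rfl⟩
    · rfl
    · rw [add_sub_cancel_left, add_sub_cancel_left, dt_circ, dt_circ]
      apply mul_le_mul_of_nonneg_left _ hr.le
      rw [← sub_nonneg, cos_sub_cos,
        show (θ + (τ - d) / 2 - θ + (θ + (τ - d) / 2 - (θ + s))) / 2 = -((s - (τ - d)) / 2) by ring,
        show (θ + (τ - d) / 2 - θ - (θ + (τ - d) / 2 - (θ + s))) / 2 = s / 2 by ring, sin_neg]
      have := mul_nonneg (sp ((s - (τ - d)) / 2) (by linarith) (by linarith)) (sp (s / 2) (by linarith) (by linarith))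
      linarith) (by
    intro u hu
    rcases alt u hu with rfl | ⟨s, h1, h2, rfl⟩
    · rw [hwe, add_sub_cancel_left, add_sub_cancel_left, dt_circ, dt_circ]
      apply mul_le_mul_of_nonneg_left _ hr.le
      rw [← sub_nonneg, cos_sub_cos,
        show (θ + (τ - d) / 2 + d - (θ + τ) + (θ + (τ - d) / 2 + d - θ)) / 2 = d / 2 by ring,
        show (θ + (τ - d) / 2 + d - (θ + τ) - (θ + (τ - d) / 2 + d - θ)) / 2 = -(τ / 2) by ring, sin_neg]
      have := mul_nonneg (sp (d / 2) (by linarith) (by linarith)) (sp (τ / 2) (by linarith) (by linarith))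
      linarith
    · rw [hwe, add_sub_cancel_left, add_sub_cancel_left, dt_circ, dt_circ]
      apply mul_le_mul_of_nonneg_left _ hr.le
      rw [← sub_nonneg, cos_sub_cos,
        show (θ + (τ - d) / 2 + d - (θ + τ) + (θ + (τ - d) / 2 + d - (θ + s))) / 2 = -((s - d) / 2) by ring,
        show (θ + (τ - d) / 2 + d - (θ + τ) - (θ + (τ - d) / 2 + d - (θ + s))) / 2 = (s - τ) / 2 by ring, sin_neg]
      have := mul_nonneg (sp ((s - d) / 2) (by linarith) (by linarith)) (sp ((s - τ) / 2) (by linarith) (by linarith))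
      linarith)
  rw [hwe, add_sub_cancel_left, add_sub_cancel_left, dt_circ, dt_circ,
    show θ + (τ - d) / 2 - θ = (τ - d) / 2 by ring,
    show θ + (τ - d) / 2 + d - (θ + τ) = -((τ - d) / 2) by ring, cos_neg] at k
  have hcd : cos d < 1 := by
    have := cos_lt_cos_of_nonneg_of_le_pi le_rfl hdp.le hd0
    rwa [cos_zero] at this
  have e2 := sin_sq_add_cos_sq d
  have k2 : (r ^ 2 * (1 - cos d)) * (2 * cos ((τ - d) / 2) ^ 2 - 1) = (r ^ 2 * (1 - cos d)) * cos d := by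
    linear_combination k + r ^ 2 * e2
  have k3 := mul_left_cancel₀ (by have : 0 < 1 - cos d := by linarith
                                  positivity) k2
  rw [← cos_two_mul, ← sub_eq_zero, cos_sub_cos, show (2 * ((τ - d) / 2) + d) / 2 = τ / 2 by ring,
    show (2 * ((τ - d) / 2) - d) / 2 = τ / 2 - d by ring] at k3
  have s1 := sin_pos_of_pos_of_lt_pi (x := τ / 2) (by linarith) (by linarith)
  have s2 : sin (τ / 2 - d) = 0 := by
    rcases mul_eq_zero.1 k3 with h | h
    · nlinarith
    · exact h
  have := (sin_eq_zero_iff_of_lt_of_lt (by linarith) (by linarith)).1 s2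
  rw [show 2 * d = τ by linarith, ← hwe]
  exact hwV

lemma forward (V : Finset Plane) (hV : IsConvexPolygon V) (ω : ℝ) (hω : ω ∈ Set.Ioo 0 π)
    (c : Plane) (r : ℝ) (hr : 0 < r)
    (h : omegaCloud (convexHull ℝ (V : Set Plane)) ω = Metric.sphere c r) :
      ∃ k : ℕ, (k : ℝ) = π / (π - ω) ∧
        ∃ θ₀ : ℝ, (V : Set Plane) =
          {p | ∃ i : Fin k, p = c + r • unitVec (θ₀ + 2 * π * ((i : ℕ) : ℝ) / (k : ℝ))} := by
  have hK := key_of V ω hω c r h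
  obtain ⟨d, hd⟩ : ∃ d, d = π - ω := ⟨_, rfl⟩
  have hd0 : 0 < d := by linarith [hω.2]
  have hdp : d < π := by linarith [hω.1]
  rw [← hd] at hK ⊢
  have hs : 0 < sin d := sin_pos_of_pos_of_lt_pi hd0 hdp
  have hC := on_circle V hV c r d hr hs.ne' hK
  obtain ⟨v0, hv0⟩ : V.Nonempty := Finset.card_pos.1 (by have := hV.1; omega)
  obtain ⟨θ, _, _, hθ⟩ := rep V c r hr hC 0 v0 hv0
  rw [zero_add] at hθ
  rw [hθ] at hv0
  have mem : ∀ n : ℕ, c + r • unitVec (θ + 2 * d * n) ∈ V := by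
    intro n
    induction n with
    | zero => simpa using hv0
    | succ n ih =>
      have := next_mem V hV.1 c r d hr hd0 hdp hK hC _ ih
      rw [show θ + 2 * d * (n + 1 : ℕ) = θ + 2 * d * n + 2 * d by push_cast; ring]
      exact this
  have gap : ∀ (n : ℕ) (τ : ℝ), 0 < τ → τ < 2 * d → c + r • unitVec (θ + 2 * d * n + τ) ∉ V :=
    fun n τ h1 h2 => gap_empty V c r d hr hd0 hdp hK hC _ (mem n) τ h1 h2
  obtain ⟨k, hk⟩ : ∃ k : ℕ, k * d = π := by
    refine ⟨⌊π / d⌋₊, ?_⟩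
    have h1 := Nat.floor_le (a := π / d) (by positivity)
    have h2 := Nat.lt_floor_add_one (π / d)
    rw [le_div_iff₀ hd0] at h1
    rw [div_lt_iff₀ hd0] at h2
    rcases h1.eq_or_lt with h | h
    · exact h
    exfalso
    apply gap ⌊π / d⌋₊ (2 * π - 2 * d * ⌊π / d⌋₊) (by linarith) (by linarith)
    have := uv_add θ 1
    rw [show θ + 2 * d * ⌊π / d⌋₊ + (2 * π - 2 * d * ⌊π / d⌋₊) = θ + (1:ℤ) * (2 * π) by push_cast; ring, this]
    exact hv0
  have hk0 : (0:ℝ) < k := by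
    by_contra! h
    nlinarith [pi_pos]
  have ang : ∀ i : ℕ, θ + 2 * π * (i : ℝ) / k = θ + 2 * d * i := by
    intro i; rw [← hk]; field_simp
  refine ⟨k, by rw [← hk]; field_simp, θ, ?_⟩
  ext p
  simp only [mem_ofPred_eq, ang, Finset.mem_coe]
  constructor
  · intro hp
    obtain ⟨σ, h0, h1, hpe⟩ := rep V c r hr hC θ p hp
    have f1 := Nat.floor_le (a := σ / (2 * d)) (by positivity)
    have f2 := Nat.lt_floor_add_one (σ / (2 * d))
    rw [le_div_iff₀ (by positivity)] at f1
    rw [div_lt_iff₀ (by positivity)] at f2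
    have hlt : ⌊σ / (2 * d)⌋₊ < k := by
      have : (⌊σ / (2 * d)⌋₊ : ℝ) < k := by
        by_contra! hc
        nlinarith
      exact_mod_cast this
    refine ⟨⟨_, hlt⟩, ?_⟩
    rcases f1.eq_or_lt with h | h
    · rw [hpe]; congr 3; simp only; linarith
    · exfalso
      apply gap ⌊σ / (2 * d)⌋₊ (σ - 2 * d * ⌊σ / (2 * d)⌋₊) (by linarith) (by linarith)
      rw [show θ + 2 * d * ⌊σ / (2 * d)⌋₊ + (σ - 2 * d * ⌊σ / (2 * d)⌋₊) = θ + σ by ring, ← hpe]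
      exact hp
  · rintro ⟨i, rfl⟩
    exact mem i

/-- The (maximal) `ω`-cloud of a convex polygon `P` is a full circle of center `c` and radius
`r` if and only if `k = π/(π-ω)` is an integer and `P` is a regular `k`-gon inscribed in that
circle. -/
theorem stmt_13 (V : Finset Plane) (hV : IsConvexPolygon V) (ω : ℝ) (hω : ω ∈ Set.Ioo 0 π)
    (c : Plane) (r : ℝ) (hr : 0 < r) :
    omegaCloud (convexHull ℝ (V : Set Plane)) ω = Metric.sphere c r ↔
      ∃ k : ℕ, (k : ℝ) = π / (π - ω) ∧
        ∃ θ₀ : ℝ, (V : Set Plane) =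
          {p | ∃ i : Fin k, p = c + r • unitVec (θ₀ + 2 * π * ((i : ℕ) : ℝ) / (k : ℝ))} := by
  constructor
  · exact forward V hV ω hω c r hr
  · rintro ⟨k, hk, θ₀, h⟩
    exact backward V ω hω c r hr k hk θ₀ h

end
end
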